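/- arXiv:1512.06718 — 3 statements merged into one kernel-verified Lean document; each statement's English description precedes it below -/
import Mathlib

section
/- Let p and q be natural numbers and set n = 4p + 2q + 2. The number of simple graphs on the vertex set Fin n which are trees and in which each of the first p vertices has degree 5, each of the next q vertices has degree 3, and each of the remaining 3p + q + 2 vertices has degree 1, is exactly (4p + 2q)! / (24^p · 2^q). -/
/-!
Write the degree of a vertex `v` as `k v + 1`. If there are more than two vertices, some `v` has
`k v = 0`; deleting this leaf leaves a tree in which the excess degree of its neighbour `w` has
dropped by one, and the deletion is undone by attaching `v` to `w` again. The number of trees with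
excess degrees `k` is therefore the sum, over the vertices `w` with `k w ≠ 0`, of the number of
trees with excess degrees `k - e_w`. This is the recurrence of the multinomial coefficients, so
the count is `(∑ v, k v)! / ∏ v, (k v)!`.
-/

section Multinomial

open Finset Nat

variable {ι : Type*} [DecidableEq ι] {s : Finset ι} {i : ι}

theorem pi_single_one_le {f : ι → ℕ} (hi : f i ≠ 0) : Pi.single i 1 ≤ f :=
  update_le_iff.2 ⟨Nat.one_le_iff_ne_zero.2 hi, fun _ _ => Nat.zero_le _⟩

theorem sum_sub_single_add_one {f : ι → ℕ} (his : i ∈ s) (hi : f i ≠ 0) :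
    ∑ j ∈ s, (f - Pi.single i 1 : ι → ℕ) j + 1 = ∑ j ∈ s, f j := by
  obtain ⟨g, rfl⟩ := exists_add_of_le (pi_single_one_le hi)
  rw [add_comm _ g, add_tsub_cancel_right]
  simp [sum_add_distrib, his]

theorem prod_factorial_add_single (hi : i ∈ s) (f : ι → ℕ) :
    ∏ j ∈ s, ((f + Pi.single i 1 : ι → ℕ) j)! = (f i + 1) * ∏ j ∈ s, (f j)! := by
  have hrest : ∏ j ∈ s.erase i, ((f + Pi.single i 1 : ι → ℕ) j)! = ∏ j ∈ s.erase i, (f j)! :=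
    prod_congr rfl fun j hj => by simp [ne_of_mem_erase hj]
  rw [← mul_prod_erase s _ hi, ← mul_prod_erase s (fun j => (f j)!) hi, hrest]
  simp [factorial_succ, mul_assoc]

theorem succ_mul_multinomial_add_single (hi : i ∈ s) (f : ι → ℕ) :
    (f i + 1) * multinomial s (f + Pi.single i 1) = (∑ j ∈ s, f j + 1) * multinomial s f := by
  have hprod : 0 < ∏ j ∈ s, (f j)! := prod_pos fun j _ => factorial_pos _
  refine Nat.eq_of_mul_eq_mul_left hprod ?_
  calc (∏ j ∈ s, (f j)!) * ((f i + 1) * multinomial s (f + Pi.single i 1))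
      = (∏ j ∈ s, ((f + Pi.single i 1 : ι → ℕ) j)!) * multinomial s (f + Pi.single i 1) := by
        rw [prod_factorial_add_single hi]; ring
    _ = (∑ j ∈ s, f j + 1)! := by
        rw [multinomial_spec]; simp [sum_add_distrib, hi]
    _ = (∏ j ∈ s, (f j)!) * ((∑ j ∈ s, f j + 1) * multinomial s f) := by
        rw [factorial_succ, ← multinomial_spec]; ring

theorem multinomial_eq_sum_multinomial_sub_single {f : ι → ℕ} (hf : ∑ j ∈ s, f j ≠ 0) :
    multinomial s f = ∑ i ∈ s with f i ≠ 0, multinomial s (f - Pi.single i 1) := by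
  have hterm (i : ι) (hi : i ∈ s) (hfi : f i ≠ 0) :
      (∑ j ∈ s, f j) * multinomial s (f - Pi.single i 1) = f i * multinomial s f := by
    obtain ⟨g, rfl⟩ := exists_add_of_le (pi_single_one_le hfi)
    rw [add_comm _ g, add_tsub_cancel_right]
    simpa [sum_add_distrib, hi] using (succ_mul_multinomial_add_single hi g).symm
  refine Nat.eq_of_mul_eq_mul_left (Nat.pos_of_ne_zero hf) ?_
  calc (∑ j ∈ s, f j) * multinomial s f
      = ∑ i ∈ s with f i ≠ 0, f i * multinomial s f := by
        rw [← sum_mul, sum_filter_ne_zero]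
    _ = (∑ j ∈ s, f j) * ∑ i ∈ s with f i ≠ 0, multinomial s (f - Pi.single i 1) := by
        rw [mul_sum]
        refine sum_congr rfl fun i hi => ?_
        obtain ⟨his, hfi⟩ := mem_filter.1 hi
        exact (hterm i his hfi).symm

theorem multinomial_univ_compl_singleton [Fintype ι] {f : ι → ℕ} (hi : f i = 0) :
    multinomial univ (Set.domRestrict {i}ᶜ f) = multinomial univ f := by
  have hsum : ∑ j, f j = f i + ∑ j : ({i}ᶜ : Set ι), f j := Fintype.sum_eq_add_sum_subtype_ne f i
  have hprod : ∏ j, (f j)! = (f i)! * ∏ j : ({i}ᶜ : Set ι), (f j)! :=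
    Fintype.prod_eq_mul_prod_subtype_ne (fun j => (f j)!) i
  simp only [multinomial, Set.domRestrict_apply, hsum, hprod, hi, factorial_zero, zero_add, one_mul]

end Multinomial

section Leaf

variable {V : Type*} {G : SimpleGraph V} {v w : V}

theorem connected_induce_compl_singleton_iff (hvw : G.neighborSet v = {w}) :
    (G.induce {v}ᶜ).Connected ↔ G.Connected := by
  have hadj : G.Adj v w := (Set.ext_iff.1 hvw w).2 rfl
  constructor
  · intro hconn
    refine G.connected_iff_exists_forall_reachable.2 ⟨w, fun x => ?_⟩
    by_cases hx : x = v
    · exact hx ▸ hadj.symm.reachable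
    · exact (hconn ⟨w, hadj.ne'⟩ ⟨x, hx⟩).map (SimpleGraph.Embedding.induce _).toHom
  · intro hconn
    have hpre : (G.induce {v}ᶜ).Preconnected :=
      hconn.preconnected.induce_of_degree_eq_one fun x hx => by
        rw [Set.notMem_compl_iff.1 hx, hvw]
        exact Set.subsingleton_singleton
    exact (SimpleGraph.connected_iff _).2 ⟨hpre, ⟨w, hadj.ne'⟩⟩

theorem isTree_induce_compl_singleton_iff [Finite V] (hvw : G.neighborSet v = {w}) :
    (G.induce {v}ᶜ).IsTree ↔ G.IsTree := by
  classical
  have := Fintype.ofFinite V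
  have hdeg : G.degree v = 1 := by
    rw [← G.card_neighborSet_eq_degree, ← Nat.card_eq_fintype_card, hvw, Nat.card_unique]
  have hedges : Nat.card (G.induce {v}ᶜ).edgeSet = Nat.card G.edgeSet - 1 := by
    simpa only [SimpleGraph.edgeFinset_card, ← Nat.card_eq_fintype_card, hdeg] using
      (G.card_edgeFinset_induce_compl_singleton v).trans (G.card_edgeFinset_deleteIncidenceSet v)
  have hpos : 1 ≤ Nat.card G.edgeSet := by
    simpa only [SimpleGraph.edgeFinset_card, ← Nat.card_eq_fintype_card, hdeg] using
      G.degree_le_card_edgeFinset v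
  have hverts : Nat.card ({v}ᶜ : Set V) + 1 = Nat.card V := by
    simpa only [Nat.card_coe_set_eq, Set.ncard_singleton] using Set.ncard_compl_add_ncard {v}
  rw [SimpleGraph.isTree_iff_connected_and_card, SimpleGraph.isTree_iff_connected_and_card,
    connected_induce_compl_singleton_iff hvw]
  refine and_congr_right' ?_
  omega

end Leaf

section AttachLeaf

variable {V : Type*} {v : V}

/-- The graph on `V` obtained from a graph `H` on `V ∖ {v}` by joining the new vertex `v` to the
single vertex `w`; deleting the leaf `v` undoes this operation. -/
def attachLeaf (w : ({v}ᶜ : Set V)) (H : SimpleGraph ({v}ᶜ : Set V)) : SimpleGraph V :=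
  H.spanningCoe ⊔ SimpleGraph.edge v w

variable {w : ({v}ᶜ : Set V)} {H : SimpleGraph ({v}ᶜ : Set V)} {G : SimpleGraph V} {x y : V}

theorem attachLeaf_adj : (attachLeaf w H).Adj x y ↔
    (∃ (hx : x ≠ v) (hy : y ≠ v), H.Adj ⟨x, hx⟩ ⟨y, hy⟩) ∨ x = v ∧ y = w ∨ x = w ∧ y = v := by
  have hw : (w : V) ≠ v := w.2
  simp only [attachLeaf, SimpleGraph.sup_adj, SimpleGraph.map_adj, SimpleGraph.edge_adj,
    Function.Embedding.subtype_apply, Subtype.exists]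
  grind

theorem neighborSet_attachLeaf_self : (attachLeaf w H).neighborSet v = {(w : V)} := by
  have hw : (w : V) ≠ v := w.2
  ext x
  simp [attachLeaf_adj, hw.symm]

theorem induce_attachLeaf : (attachLeaf w H).induce {v}ᶜ = H := by
  ext x y
  have hx : (x : V) ≠ v := x.2
  have hy : (y : V) ≠ v := y.2
  simp [attachLeaf_adj, hx, hy]

theorem attachLeaf_induce (hvw : G.neighborSet v = {(w : V)}) :
    attachLeaf w (G.induce {v}ᶜ) = G := by
  have hadj (x : V) : G.Adj v x ↔ x = w := Set.ext_iff.1 hvw x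
  ext x y
  have hind : (∃ (hx : x ≠ v) (hy : y ≠ v), (G.induce {v}ᶜ).Adj ⟨x, hx⟩ ⟨y, hy⟩) ↔
      x ≠ v ∧ y ≠ v ∧ G.Adj x y :=
    ⟨fun ⟨hx, hy, hxy⟩ => ⟨hx, hy, hxy⟩, fun ⟨hx, hy, hxy⟩ => ⟨hx, hy, hxy⟩⟩
  rw [attachLeaf_adj, hind]
  grind [SimpleGraph.adj_comm, SimpleGraph.irrefl]

theorem ncard_neighborSet_attachLeaf_coe [Finite V] [DecidableEq V] (u : ({v}ᶜ : Set V)) :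
    ((attachLeaf w H).neighborSet u).ncard =
      (H.neighborSet u).ncard + (Pi.single w 1 : _ → ℕ) u := by
  have hu : (u : V) ≠ v := u.2
  have hrest : v ∉ Subtype.val '' H.neighborSet u := by simp
  rw [← Set.ncard_image_of_injective (H.neighborSet u) Subtype.val_injective]
  by_cases huw : u = w
  · have hnbr : (attachLeaf w H).neighborSet u = insert v (Subtype.val '' H.neighborSet u) := by
      ext x
      simp only [SimpleGraph.mem_neighborSet, attachLeaf_adj, huw, Set.mem_insert_iff,
        Set.mem_image, Subtype.exists]
      grind
    rw [hnbr, Set.ncard_insert_of_notMem hrest, huw, Pi.single_eq_same]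
  · have hnbr : (attachLeaf w H).neighborSet u = Subtype.val '' H.neighborSet u := by
      ext x
      simp [attachLeaf_adj, hu, Subtype.coe_inj, huw]
    rw [hnbr, Pi.single_eq_of_ne huw, add_zero]

theorem attachLeaf_injective : Function.Injective
    fun wH : ({v}ᶜ : Set V) × SimpleGraph ({v}ᶜ : Set V) => attachLeaf wH.1 wH.2 := by
  rintro ⟨w, H⟩ ⟨w', H'⟩ (h : attachLeaf w H = attachLeaf w' H')
  have hw : w = w' := by
    simpa [neighborSet_attachLeaf_self, Subtype.coe_inj] using
      congrArg (SimpleGraph.neighborSet · v) h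
  have hH : H = H' := by
    simpa only [induce_attachLeaf] using congrArg (SimpleGraph.induce {v}ᶜ) h
  rw [hw, hH]

theorem exists_attachLeaf_eq (h : (G.neighborSet v).ncard = 1) :
    ∃ w H, attachLeaf (v := v) w H = G := by
  obtain ⟨w, hvw⟩ := Set.ncard_eq_one.1 h
  have hadj : G.Adj v w := (Set.ext_iff.1 hvw w).2 rfl
  exact ⟨⟨w, hadj.ne'⟩, G.induce {v}ᶜ, attachLeaf_induce hvw⟩

end AttachLeaf

section Count

variable {V : Type*}

/-- The trees on `V` in which each vertex `v` has exactly `d v` neighbours. -/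
def treesWithDegrees (d : V → ℕ) : Set (SimpleGraph V) :=
  {G | G.IsTree ∧ ∀ v, (G.neighborSet v).ncard = d v}

section Recurrence

variable {d k : V → ℕ} {v : V} {w : ({v}ᶜ : Set V)} {H : SimpleGraph ({v}ᶜ : Set V)}

theorem attachLeaf_mem_treesWithDegrees_iff [Finite V] [DecidableEq V] (hv : d v = 1) :
    attachLeaf w H ∈ treesWithDegrees d ↔
      H.IsTree ∧ ∀ u, (H.neighborSet u).ncard + (Pi.single w 1 : _ → ℕ) u = d u := by
  have htree : (attachLeaf w H).IsTree ↔ H.IsTree := by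
    rw [← isTree_induce_compl_singleton_iff neighborSet_attachLeaf_self, induce_attachLeaf]
  simp only [← ncard_neighborSet_attachLeaf_coe, treesWithDegrees, Set.mem_ofPred_eq, htree]
  refine and_congr_right' ⟨fun h u => h u, fun h x => ?_⟩
  obtain rfl | hx := eq_or_ne x v
  · rw [neighborSet_attachLeaf_self, Set.ncard_singleton, hv]
  · exact h ⟨x, hx⟩

theorem ncard_treesWithDegrees_eq_sum_attachLeaf [Fintype V] [DecidableEq V] (hv : d v = 1) :
    (treesWithDegrees d).ncard =
      ∑ w : ({v}ᶜ : Set V), {H | attachLeaf w H ∈ treesWithDegrees d}.ncard := by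
  have hcover : treesWithDegrees d ⊆ Set.range
      fun wH : ({v}ᶜ : Set V) × SimpleGraph ({v}ᶜ : Set V) => attachLeaf wH.1 wH.2 := by
    rintro G ⟨-, hdeg⟩
    obtain ⟨w, H, hG⟩ := exists_attachLeaf_eq ((hdeg v).trans hv)
    exact ⟨(w, H), hG⟩
  rw [← Set.ncard_preimage_of_injective_subset_range attachLeaf_injective hcover]
  simp only [← Nat.card_coe_set_eq, ← Nat.card_sigma]
  exact Nat.card_congr
    (Equiv.subtypeProdEquivSigmaSubtype fun w H => attachLeaf w H ∈ treesWithDegrees d)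

theorem setOf_attachLeaf_mem_treesWithDegrees [Finite V] [DecidableEq V] (hv : k v = 0)
    (hw : k w ≠ 0) :
    {H | attachLeaf w H ∈ treesWithDegrees (k + 1)} =
      treesWithDegrees (Set.domRestrict {v}ᶜ k - Pi.single w 1 + 1) := by
  have hle : Pi.single w 1 ≤ Set.domRestrict {v}ᶜ k := pi_single_one_le hw
  have hdv : (k + 1) v = 1 := by simp [hv]
  ext H
  rw [Set.mem_ofPred_eq, attachLeaf_mem_treesWithDegrees_iff hdv]
  refine and_congr_right' (forall_congr' fun u => ?_)
  have hu : (Pi.single w 1 : _ → ℕ) u ≤ k u := hle u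
  simp only [Pi.add_apply, Pi.sub_apply, Pi.one_apply, Set.domRestrict_apply]
  omega

-- Otherwise `v` and `w` would be the two ends of an isolated edge.
theorem setOf_attachLeaf_mem_treesWithDegrees_eq_empty [Finite V] (hV : 2 < Nat.card V)
    (hv : d v = 1) (hw : d w = 1) : {H | attachLeaf w H ∈ treesWithDegrees d} = ∅ := by
  classical
  have hverts : 1 < Nat.card ({v}ᶜ : Set V) := by
    rw [Nat.card_coe_set_eq, Set.ncard_compl, Set.ncard_singleton]
    omega
  have : Nontrivial ({v}ᶜ : Set V) := Finite.one_lt_card_iff_nontrivial.1 hverts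
  refine Set.eq_empty_iff_forall_notMem.2 fun H hH => ?_
  obtain ⟨htree, hdeg⟩ := (attachLeaf_mem_treesWithDegrees_iff hv).1 hH
  obtain ⟨x, hwx⟩ := htree.connected.preconnected.exists_adj_of_nontrivial w
  have hpos : 0 < (H.neighborSet w).ncard := (Set.ncard_pos).2 ⟨x, hwx⟩
  have hdegw := hdeg w
  rw [Pi.single_eq_same, hw] at hdegw
  omega

theorem ncard_treesWithDegrees_add_one_eq_sum [Fintype V] [DecidableEq V]
    (hV : 2 < Fintype.card V) (hv : k v = 0) :
    (treesWithDegrees (k + 1)).ncard = ∑ w with Set.domRestrict {v}ᶜ k w ≠ 0,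
      (treesWithDegrees (Set.domRestrict {v}ᶜ k - Pi.single w 1 + 1)).ncard := by
  have hdv : (k + 1) v = 1 := by simp [hv]
  rw [ncard_treesWithDegrees_eq_sum_attachLeaf hdv, Finset.sum_filter]
  refine Finset.sum_congr rfl fun w _ => ?_
  split_ifs with hw
  · rw [setOf_attachLeaf_mem_treesWithDegrees hv hw]
  · have hdw : (k + 1) (w : V) = 1 := by simpa using hw
    rw [← Nat.card_eq_fintype_card] at hV
    rw [setOf_attachLeaf_mem_treesWithDegrees_eq_empty hV hdv hdw, Set.ncard_empty]

end Recurrence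

theorem eq_top_of_connected_of_card_eq_two {G : SimpleGraph V} (hG : G.Connected)
    (hV : Nat.card V = 2) : G = ⊤ := by
  have : Finite V := Nat.finite_of_card_ne_zero (by omega)
  have : Nontrivial V := Finite.one_lt_card_iff_nontrivial.1 (by omega)
  ext x y
  obtain ⟨z, hxz⟩ := hG.preconnected.exists_adj_of_nontrivial x
  obtain ⟨_, -, huniq⟩ := (Nat.card_eq_two_iff' x).1 hV
  refine ⟨SimpleGraph.Adj.ne, fun hxy => ?_⟩
  rwa [(huniq y hxy.ne').trans (huniq z hxz.ne').symm]

theorem treesWithDegrees_one_of_card_eq_two (hV : Nat.card V = 2) :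
    treesWithDegrees (1 : V → ℕ) = {⊤} := by
  have : Finite V := Nat.finite_of_card_ne_zero (by omega)
  have : Nonempty V := Finite.card_pos_iff.1 (by omega)
  refine Set.eq_singleton_iff_unique_mem.2
    ⟨⟨⟨SimpleGraph.connected_top, ?_⟩, fun v => ?_⟩,
      fun G hG => eq_top_of_connected_of_card_eq_two hG.1.connected hV⟩
  · exact .of_card_le_two (by rw [ENat.card_eq_coe_natCard, hV]; rfl)
  · rw [SimpleGraph.neighborSet_top, Set.ncard_compl, Set.ncard_singleton, hV]
    rfl

theorem count_labelled_trees_general [Fintype V] (k : V → ℕ)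
    (hk : ∑ v, k v + 2 = Fintype.card V) :
    (treesWithDegrees (k + 1)).ncard = Nat.multinomial Finset.univ k := by
  classical
  induction hn : ∑ v, k v generalizing V with
  | zero =>
    obtain rfl : k = 0 := by simpa [funext_iff] using hn
    have hV : Nat.card V = 2 := by rw [Nat.card_eq_fintype_card, ← hk, hn]
    rw [zero_add, treesWithDegrees_one_of_card_eq_two hV, Set.ncard_singleton]
    simp [Nat.multinomial]
  | succ n ih =>
    obtain ⟨v, hv⟩ : ∃ v, k v = 0 := by
      by_contra! hpos
      have hle : ∑ _v : V, 1 ≤ ∑ v, k v :=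
        Finset.sum_le_sum fun v _ => Nat.one_le_iff_ne_zero.2 (hpos v)
      rw [← Finset.card_eq_sum_ones, Finset.card_univ] at hle
      omega
    have hcard : Fintype.card ({v}ᶜ : Set V) = n + 2 := by
      rw [Fintype.card_compl_set, Set.card_singleton]
      omega
    have hsum : ∑ u, Set.domRestrict {v}ᶜ k u = n + 1 := by
      have hsplit : ∑ u, k u = k v + ∑ u, Set.domRestrict {v}ᶜ k u :=
        Fintype.sum_eq_add_sum_subtype_ne k v
      omega
    rw [ncard_treesWithDegrees_add_one_eq_sum (by omega) hv, ← multinomial_univ_compl_singleton hv,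
      multinomial_eq_sum_multinomial_sub_single (by omega)]
    refine Finset.sum_congr rfl fun w hw => ?_
    have hsub := sum_sub_single_add_one (Finset.mem_univ w) (Finset.mem_filter.1 hw).2
    exact ih _ (by omega) (by omega)

end Count

section DegreeProfile

open Finset Nat

@[to_additive]
theorem prod_range_ite_lt_ite_lt {M : Type*} [CommMonoid M] (p q r : ℕ) (a b c : M) :
    ∏ i ∈ range (p + q + r), (if i < p then a else if i < p + q then b else c) =
      a ^ p * b ^ q * c ^ r := by
  have hfst : ∀ i ∈ range p, (if i < p then a else if i < p + q then b else c) = a :=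
    fun i hi => if_pos (mem_range.1 hi)
  have hsnd : ∀ i ∈ range q, (if p + i < p then a else if p + i < p + q then b else c) = b := by
    simp +contextual
  have htrd : ∀ i ∈ range r,
      (if p + q + i < p then a else if p + q + i < p + q then b else c) = c := by
    grind
  rw [prod_range_add, prod_range_add, prod_congr rfl hfst, prod_congr rfl hsnd,
    prod_congr rfl htrd, prod_const, prod_const, prod_const, card_range, card_range, card_range]

variable {p q r n : ℕ}

@[to_additive]
theorem prod_fin_ite_lt_ite_lt {M : Type*} [CommMonoid M] (hn : p + q + r = n) (a b c : M) :
    ∏ i : Fin n, (if (i : ℕ) < p then a else if (i : ℕ) < p + q then b else c) =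
      a ^ p * b ^ q * c ^ r := by
  rw [Fin.prod_univ_eq_prod_range fun i => if i < p then a else if i < p + q then b else c,
    ← hn, prod_range_ite_lt_ite_lt]

theorem multinomial_fin_ite_lt_ite_lt (hn : p + q + r = n) (a b c : ℕ) :
    multinomial univ
        (fun i : Fin n => if (i : ℕ) < p then a else if (i : ℕ) < p + q then b else c) =
      (p * a + q * b + r * c)! / (a ! ^ p * b ! ^ q * c ! ^ r) := by
  simp only [multinomial, apply_ite factorial, sum_fin_ite_lt_ite_lt hn,
    prod_fin_ite_lt_ite_lt hn, smul_eq_mul]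

end DegreeProfile

/-- The number of labelled trees on `Fin (4p + 2q + 2)` in which each of the
first `p` vertices has degree `5`, each of the next `q` vertices has degree `3`,
and each of the remaining `3p + q + 2` vertices has degree `1`, is
`(4p + 2q)! / (24^p * 2^q)`. -/
theorem count_labelled_trees (p q : ℕ) :
    Nat.card {G : SimpleGraph (Fin (4 * p + 2 * q + 2)) //
        G.IsTree ∧ ∀ v : Fin (4 * p + 2 * q + 2),
          Nat.card (G.neighborSet v) =
            if (v : ℕ) < p then 5 else if (v : ℕ) < p + q then 3 else 1} =
      Nat.factorial (4 * p + 2 * q) / (24 ^ p * 2 ^ q) := by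
  let excess (v : Fin (4 * p + 2 * q + 2)) : ℕ :=
    if (v : ℕ) < p then 4 else if (v : ℕ) < p + q then 2 else 0
  have hn : p + q + (3 * p + q + 2) = 4 * p + 2 * q + 2 := by ring
  have hdeg : (fun v : Fin (4 * p + 2 * q + 2) =>
      if (v : ℕ) < p then 5 else if (v : ℕ) < p + q then 3 else 1) = excess + 1 := by
    funext v
    simp only [excess, Pi.add_apply, Pi.one_apply]
    split_ifs <;> rfl
  have hsum : ∑ v, excess v + 2 = Fintype.card (Fin (4 * p + 2 * q + 2)) := by
    simp only [excess, sum_fin_ite_lt_ite_lt hn, smul_eq_mul, Fintype.card_fin]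
    ring
  have hmultinomial : Nat.multinomial Finset.univ excess =
      Nat.factorial (4 * p + 2 * q) / (24 ^ p * 2 ^ q) := by
    rw [multinomial_fin_ite_lt_ite_lt hn]
    simp [Nat.factorial, mul_comm]
  rw [← hmultinomial, ← count_labelled_trees_general excess hsum, ← hdeg]
  rfl
end

section
/- Let μ ≥ 0 be real, let G_c(μ) be the unique real root x > 1 of −3x³ + 4x² − μx + 2μ = 0, set g_c(μ) = (G_c(μ) − 1)/(G_c(μ)²·(G_c(μ)² + μ)) and K(μ) = √( G_c(μ)²·(G_c(μ)² + μ) / (6·G_c(μ)² + μ) ). Then, as n → ∞, the ratio α_n(μ) / ( K(μ)·g_c(μ)^{−n} / (2·√π·n^{3/2}) ) tends to 1; that is, α_n(μ) is asymptotically equivalent to K(μ)·g_c(μ)^{−n}/(2√π·n^{3/2}). -/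
open Filter

/-- `α_n(μ) = ∑_{q=0}^{n} μ^q/(3n − 2q + 1) · C(n,q) · C(4n − 2q, n)`, the
coefficient of `g^n` in the leading-order two-point function `G_LO(g, μ)`. -/
noncomputable def alphaCoeff (μ : ℝ) (n : ℕ) : ℝ :=
  ∑ q ∈ Finset.range (n + 1),
    μ ^ q / (3 * (n : ℝ) - 2 * (q : ℝ) + 1) * (Nat.choose n q : ℝ) *
      (Nat.choose (4 * n - 2 * q) n : ℝ)

/-!
Lagrange inversion gives `(n + 1) α_{n+1} = [X ^ n] φ ^ (n + 1)` with
`φ = (1 + X) ^ 4 + μ (1 + X) ^ 2`. By Cauchy's formula on the circle of radius `r`, this coefficient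
is an integral of the `(n + 1)`-st power of `F θ = φ (r e^{iθ}) e^{-iθ} / φ r`, the characteristic
function of `J - 1`, where `J = j` has probability `φ_j r ^ j / φ r`. At the saddle point
`r φ' r = φ r`, which for `r = G_c - 1` is the cubic equation for `G_c`, the variable `J - 1` is
centred, with variance `σ² = r² φ'' r / φ r`. Hence `F θ = 1 - σ² θ² / 2 + o(θ²)`, while
`‖F θ‖ ≤ e^{-c θ²}` on `[-π, π]` because two consecutive coefficients of `φ` are positive; Laplace's
method then yields `√n ∫ F ^ n → √(2π / σ²)`.
-/

section Laplace

open MeasureTheory Asymptotics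
open scoped Topology Real

theorem tendsto_div_sqrt_natCast_atTop (t : ℝ) :
    Tendsto (fun n : ℕ => t / √n) atTop (𝓝 0) :=
  (Real.tendsto_sqrt_atTop.comp tendsto_natCast_atTop_atTop).const_div_atTop t

theorem tendsto_pow_comp_div_sqrt {F : ℝ → ℂ} {b : ℝ}
    (hF : (fun θ : ℝ => F θ - (1 - b * θ ^ 2)) =o[𝓝 0] fun θ : ℝ => θ ^ 2) (t : ℝ) :
    Tendsto (fun n : ℕ => F (t / √n) ^ n) atTop (𝓝 (Real.exp (-b * t ^ 2) : ℝ)) := by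
  have h_sq (n : ℕ) : (t / √n) ^ 2 = t ^ 2 / n := by
    rw [div_pow, Real.sq_sqrt n.cast_nonneg]
  have h_bigO : (fun n : ℕ => (t / √n) ^ 2) =O[atTop] fun n : ℕ => 1 / (n : ℂ) :=
    .of_bound (t ^ 2) (.of_forall fun n => by rw [h_sq]; simp [div_eq_mul_inv])
  rw [Complex.ofReal_exp]
  refine Complex.tendsto_pow_exp_of_isLittleO_sub_add_div _
    (((hF.comp_tendsto (tendsto_div_sqrt_natCast_atTop t)).trans_isBigO h_bigO).congr_left
      fun n => ?_)
  simp only [Function.comp_apply, ← Complex.ofReal_pow, h_sq]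
  push_cast
  ring

theorem norm_indicator_pow_mul_div_sqrt_le {S : Set ℝ} {F H : ℝ → ℂ} {c C : ℝ} (hC : 0 ≤ C)
    (hHC : ∀ θ ∈ S, ‖H θ‖ ≤ C) (hFc : ∀ θ ∈ S, ‖F θ‖ ≤ Real.exp (-c * θ ^ 2)) {n : ℕ} (hn : n ≠ 0)
    (t : ℝ) :
    ‖S.indicator (fun θ => F θ ^ n * H θ) (t / √n)‖ ≤ Real.exp (-c * t ^ 2) * C := by
  by_cases ht : t / √n ∈ S
  · have h_exp : Real.exp (-c * (t / √n) ^ 2) ^ n = Real.exp (-c * t ^ 2) := by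
      rw [← Real.exp_nat_mul, div_pow, Real.sq_sqrt n.cast_nonneg]
      field_simp
    rw [Set.indicator_of_mem ht, norm_mul, norm_pow, ← h_exp]
    gcongr
    exacts [hFc _ ht, hHC _ ht]
  · rw [Set.indicator_of_notMem ht, norm_zero]
    positivity

theorem tendsto_sqrt_mul_setIntegral_pow_mul {S : Set ℝ} (hS : MeasurableSet S) (hS0 : S ∈ 𝓝 0)
    {F H : ℝ → ℂ} (hF : Measurable F) (hH : Measurable H) (hH0 : ContinuousAt H 0) {b c C : ℝ}
    (hHC : ∀ θ ∈ S, ‖H θ‖ ≤ C) (hc : 0 < c) (hFc : ∀ θ ∈ S, ‖F θ‖ ≤ Real.exp (-c * θ ^ 2))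
    (hFb : (fun θ : ℝ => F θ - (1 - b * θ ^ 2)) =o[𝓝 0] fun θ : ℝ => θ ^ 2) :
    Tendsto (fun n : ℕ => √n * ∫ θ in S, F θ ^ n * H θ) atTop (𝓝 (√(π / b) * H 0)) := by
  have hC : 0 ≤ C := (norm_nonneg _).trans (hHC 0 (mem_of_mem_nhds hS0))
  have h_rescaled (n : ℕ) : √n * ∫ θ in S, F θ ^ n * H θ =
      ∫ t : ℝ, S.indicator (fun θ => F θ ^ n * H θ) (t / √n) := by
    rw [Measure.integral_comp_div (S.indicator _), integral_indicator hS,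
      abs_of_nonneg (Real.sqrt_nonneg _), Complex.real_smul]
  have h_gaussian : ∫ t : ℝ, (Real.exp (-b * t ^ 2) : ℝ) * H 0 = √(π / b) * H 0 := by
    rw [integral_mul_const, integral_complex_ofReal, integral_gaussian]
  simp only [h_rescaled]
  rw [← h_gaussian]
  refine tendsto_integral_filter_of_dominated_convergence
    (fun t => Real.exp (-c * t ^ 2) * C) ?measurable ?bounded ?integrable ?pointwise
  case measurable =>
    exact .of_forall fun n => (((hF.pow_const n).mul hH).indicator hS).comp
      (measurable_id.div_const _) |>.aestronglyMeasurable
  case bounded =>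
    filter_upwards [eventually_ne_atTop 0] with n hn
    exact .of_forall (norm_indicator_pow_mul_div_sqrt_le hC hHC hFc hn)
  case integrable => exact (integrable_exp_neg_mul_sq hc).mul_const C
  case pointwise =>
    refine .of_forall fun t => ?_
    have h_arg := tendsto_div_sqrt_natCast_atTop t
    refine ((tendsto_pow_comp_div_sqrt hFb t).mul (hH0.tendsto.comp h_arg)).congr' ?_
    filter_upwards [h_arg.eventually_mem hS0] with n hn
    rw [Set.indicator_of_mem hn, Function.comp_apply]

end Laplace

section ExponentialSums

open Asymptotics
open scoped Topology Real

theorem isLittleO_exp_mul_I_sub_taylor (x : ℝ) :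
    (fun θ : ℝ => Complex.exp (x * θ * Complex.I) -
      (1 + x * θ * Complex.I - x ^ 2 * θ ^ 2 / 2)) =o[𝓝 0] fun θ : ℝ => θ ^ 2 := by
  have h_arg : Tendsto (fun θ : ℝ => x * θ * Complex.I) (𝓝 0) (𝓝 0) :=
    Continuous.tendsto' (by fun_prop) _ _ (by simp)
  have h_sq : (fun θ : ℝ => (x * θ * Complex.I) ^ 2) =O[𝓝 0] fun θ : ℝ => θ ^ 2 :=
    .of_bound (x ^ 2) (.of_forall fun θ => by simp [mul_pow])
  refine (((Complex.exp_sub_sum_range_succ_isLittleO_pow 2).comp_tendsto h_arg).trans_isBigO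
    h_sq).congr_left fun θ => ?_
  simp only [Function.comp_apply, Finset.sum_range_succ, Finset.sum_range_zero, mul_pow,
    Complex.I_sq, Nat.factorial]
  push_cast
  ring

variable {ι : Type*} {s : Finset ι} {w x : ι → ℝ}

theorem isLittleO_sum_mul_exp_sub_taylor (hw : ∑ j ∈ s, w j = 1)
    (hx : ∑ j ∈ s, w j * x j = 0) :
    (fun θ : ℝ => ∑ j ∈ s, w j * Complex.exp (x j * θ * Complex.I) -
      (1 - ((∑ j ∈ s, w j * x j ^ 2) / 2 : ℝ) * θ ^ 2)) =o[𝓝 0] fun θ : ℝ => θ ^ 2 := by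
  refine (IsLittleO.fun_sum fun j (_ : j ∈ s) =>
    (isLittleO_exp_mul_I_sub_taylor (x j)).const_mul_left (w j)).congr_left fun θ => ?_
  have hw' : ∑ j ∈ s, (w j : ℂ) = 1 := by exact_mod_cast hw
  have hx' : ∑ j ∈ s, (w j : ℂ) * x j = 0 := by exact_mod_cast hx
  have h_taylor : ∑ j ∈ s, (w j : ℂ) * (1 + x j * θ * Complex.I - x j ^ 2 * θ ^ 2 / 2) =
      1 - (∑ j ∈ s, (w j : ℂ) * x j ^ 2) / 2 * θ ^ 2 := by
    calc _ = ∑ j ∈ s, (w j : ℂ) + (∑ j ∈ s, (w j : ℂ) * x j) * (θ * Complex.I)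
          - (∑ j ∈ s, (w j : ℂ) * x j ^ 2) * (θ ^ 2 / 2) := by
          simp only [Finset.sum_mul, ← Finset.sum_add_distrib, ← Finset.sum_sub_distrib]
          exact Finset.sum_congr rfl fun j _ => by ring
      _ = _ := by rw [hw', hx']; ring
  push_cast
  rw [← h_taylor, ← Finset.sum_sub_distrib]
  simp only [mul_sub]

theorem norm_sum_mul_exp_le_sum (hw : ∀ j ∈ s, 0 ≤ w j) (θ : ℝ) :
    ‖∑ j ∈ s, w j * Complex.exp (x j * θ * Complex.I)‖ ≤ ∑ j ∈ s, w j := by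
  refine norm_sum_le_of_le _ fun j hj => ?_
  rw [norm_mul, ← Complex.ofReal_mul, Complex.norm_exp_ofReal_mul_I, mul_one,
    Complex.norm_of_nonneg (hw j hj)]

theorem norm_mul_exp_add_mul_exp_le {a b : ℝ} (ha : 0 ≤ a) (hb : 0 ≤ b) (hab : a + b ≤ 1)
    (α β : ℝ) :
    ‖(a * Complex.exp (α * Complex.I) + b * Complex.exp (β * Complex.I) : ℂ)‖ ≤
      a + b - a * b * (1 - Real.cos (β - α)) := by
  have h_sq : ‖(a * Complex.exp (α * Complex.I) + b * Complex.exp (β * Complex.I) : ℂ)‖ ^ 2 =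
      (a + b) ^ 2 - 2 * (a * b * (1 - Real.cos (β - α))) := by
    rw [← Complex.normSq_eq_norm_sq, Complex.normSq_apply, Real.cos_sub]
    simp only [Complex.add_re, Complex.add_im, Complex.re_ofReal_mul, Complex.im_ofReal_mul,
      Complex.exp_ofReal_mul_I_re, Complex.exp_ofReal_mul_I_im]
    linear_combination a ^ 2 * Real.sin_sq_add_cos_sq α + b ^ 2 * Real.sin_sq_add_cos_sq β
  have h_nonneg : 0 ≤ a * b * (1 - Real.cos (β - α)) :=
    mul_nonneg (mul_nonneg ha hb) (sub_nonneg.2 (Real.cos_le_one _))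
  have h_le : a * b * (1 - Real.cos (β - α)) ≤ a + b := by
    nlinarith [Real.neg_one_le_cos (β - α), mul_nonneg ha hb]
  refine le_of_sq_le_sq ?_ (sub_nonneg.2 h_le)
  nlinarith

theorem norm_sum_mul_exp_le_exp_neg_mul_sq (hw : ∀ j ∈ s, 0 ≤ w j) (hw1 : ∑ j ∈ s, w j = 1)
    {i k : ι} (hi : i ∈ s) (hk : k ∈ s) (hik : x k = x i + 1) {θ : ℝ} (hθ : |θ| ≤ π) :
    ‖∑ j ∈ s, w j * Complex.exp (x j * θ * Complex.I)‖ ≤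
      Real.exp (-(w i * w k * (2 / π ^ 2)) * θ ^ 2) := by
  classical
  have h_ne : i ≠ k := by
    rintro rfl
    linarith
  have h_pair : {i, k} ⊆ s := by simp [Finset.insert_subset_iff, hi, hk]
  have h_rest : ∑ j ∈ s \ {i, k}, w j = 1 - (w i + w k) := by
    rw [← hw1, ← Finset.sum_sdiff h_pair, Finset.sum_pair h_ne, add_sub_cancel_right]
  have hw_rest : ∀ j ∈ s \ {i, k}, 0 ≤ w j := fun j hj => hw j (Finset.mem_sdiff.1 hj).1
  have h_pair_le : w i + w k ≤ 1 := sub_nonneg.1 (h_rest ▸ Finset.sum_nonneg hw_rest)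
  have h_norm_rest : ‖∑ j ∈ s \ {i, k}, w j * Complex.exp (x j * θ * Complex.I)‖ ≤
      1 - (w i + w k) :=
    (norm_sum_mul_exp_le_sum hw_rest θ).trans_eq h_rest
  have h_norm_pair : ‖w i * Complex.exp (x i * θ * Complex.I) +
      w k * Complex.exp (x k * θ * Complex.I)‖ ≤
      w i + w k - w i * w k * (1 - Real.cos θ) := by
    have h := norm_mul_exp_add_mul_exp_le (hw i hi) (hw k hk) h_pair_le (x i * θ) (x k * θ)
    rwa [hik, ← sub_mul, add_sub_cancel_left, one_mul, ← hik, Complex.ofReal_mul,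
      Complex.ofReal_mul] at h
  have h_cos : w i * w k * (2 / π ^ 2 * θ ^ 2) ≤ w i * w k * (1 - Real.cos θ) :=
    mul_le_mul_of_nonneg_left (by linarith [Real.cos_le_one_sub_mul_cos_sq hθ])
      (mul_nonneg (hw i hi) (hw k hk))
  calc ‖∑ j ∈ s, w j * Complex.exp (x j * θ * Complex.I)‖
      ≤ (1 - (w i + w k)) + (w i + w k - w i * w k * (1 - Real.cos θ)) := by
        rw [← Finset.sum_sdiff h_pair, Finset.sum_pair h_ne]
        exact norm_add_le_of_le h_norm_rest h_norm_pair
    _ ≤ 1 - w i * w k * (2 / π ^ 2) * θ ^ 2 := by linarith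
    _ ≤ Real.exp (-(w i * w k * (2 / π ^ 2)) * θ ^ 2) := by
        rw [neg_mul]
        exact Real.one_sub_le_exp_neg _

end ExponentialSums

section SaddlePoint

open Polynomial
open scoped Real Topology

theorem sum_support_coeff_mul_natCast_mul_pow {R : Type*} [CommSemiring R] (P : R[X]) (r : R) :
    ∑ j ∈ P.support, P.coeff j * j * r ^ j = r * P.derivative.eval r := by
  rw [derivative_eval, sum_def, Finset.mul_sum]
  refine Finset.sum_congr rfl fun j _ => ?_
  cases j with
  | zero => simp
  | succ j => rw [Nat.add_sub_cancel, pow_succ]; ring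

theorem sum_support_coeff_mul_natCast_mul_sub_one_mul_pow {R : Type*} [CommRing R] (P : R[X])
    (r : R) : ∑ j ∈ P.support, P.coeff j * (j * (j - 1)) * r ^ j =
      r ^ 2 * P.derivative.derivative.eval r := by
  rw [derivative_apply P, sum_def, derivative_sum, eval_finsetSum, Finset.mul_sum]
  refine Finset.sum_congr rfl fun j _ => ?_
  rw [derivative_C_mul_X_pow, eval_C_mul, eval_pow, eval_X]
  rcases j with _ | _ | j
  · simp
  · simp
  · simp only [Nat.add_sub_cancel, Nat.cast_add, Nat.cast_one]
    ring

theorem coeff_mul_pow_eq_integral (P : ℂ[X]) (z : ℂ) (n : ℕ) :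
    P.coeff n * z ^ n = 1 / (2 * π) * ∫ θ in -π..π,
      P.eval (z * Complex.exp (θ * Complex.I)) * Complex.exp (-(n * θ * Complex.I)) := by
  have : Fact (0 < 2 * π) := ⟨Real.two_pi_pos⟩
  rw [← comp_C_mul_X_coeff, ← fourierCoeff_toAddCircle_natCast,
    fourierCoeff_eq_intervalIntegral _ _ (-π), show -π + 2 * π = π by ring, Complex.real_smul]
  push_cast
  congr 1
  refine intervalIntegral.integral_congr fun θ _ => ?_
  have h_toCircle : (AddCircle.toCircle (θ : AddCircle (2 * π)) : ℂ) =
      Complex.exp (θ * Complex.I) := by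
    simp [AddCircle.toCircle]
  have h_fourier : fourier (-n : ℤ) (θ : AddCircle (2 * π)) =
      Complex.exp (-(n * θ * Complex.I)) := by
    rw [fourier_coe_apply]
    congr 1
    push_cast
    field_simp
  rw [h_fourier, smul_eq_mul, mul_comm]
  simp [toAddCircle, h_toCircle]

/-- The probability that the Boltzmann distribution of the polynomial `P` at the parameter `r`, for
which `j` is weighted by the `j`-th term of `P.eval r`, gives to `j`. It is a probability if `P` has
nonnegative coefficients and `0 < P.eval r`; if `P.eval r = 0` it takes the junk value `0`. -/
noncomputable def boltzmannWeight (P : ℝ[X]) (r : ℝ) (j : ℕ) : ℝ :=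
  P.coeff j * r ^ j / P.eval r

variable {P : ℝ[X]} {r : ℝ}

theorem eval_pos_of_coeff_nonneg (hP : ∀ j, 0 ≤ P.coeff j) {i : ℕ} (hi : 0 < P.coeff i)
    (hr : 0 < r) : 0 < P.eval r := by
  rw [eval_eq_sum, sum_def]
  exact Finset.sum_pos' (fun j _ => mul_nonneg (hP j) (by positivity))
    ⟨i, mem_support_iff.2 hi.ne', by positivity⟩

theorem sum_boltzmannWeight (hr : P.eval r ≠ 0) :
    ∑ j ∈ P.support, boltzmannWeight P r j = 1 := by
  simp only [boltzmannWeight, ← Finset.sum_div]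
  rw [← sum_def P fun j a => a * r ^ j, ← eval_eq_sum, div_self hr]

theorem sum_boltzmannWeight_mul_sub_one (hsaddle : r * P.derivative.eval r = P.eval r) :
    ∑ j ∈ P.support, boltzmannWeight P r j * (j - 1) = 0 := by
  calc ∑ j ∈ P.support, boltzmannWeight P r j * (j - 1)
      = (∑ j ∈ P.support, P.coeff j * j * r ^ j - ∑ j ∈ P.support, P.coeff j * r ^ j) /
          P.eval r := by
        rw [← Finset.sum_sub_distrib, Finset.sum_div]
        exact Finset.sum_congr rfl fun j _ => by rw [boltzmannWeight]; ring
    _ = 0 := by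
        rw [sum_support_coeff_mul_natCast_mul_pow, hsaddle, eval_eq_sum, sum_def, sub_self,
          zero_div]

theorem sum_boltzmannWeight_mul_sub_one_sq (hsaddle : r * P.derivative.eval r = P.eval r) :
    ∑ j ∈ P.support, boltzmannWeight P r j * (j - 1) ^ 2 =
      r ^ 2 * P.derivative.derivative.eval r / P.eval r := by
  calc ∑ j ∈ P.support, boltzmannWeight P r j * (j - 1) ^ 2
      = (∑ j ∈ P.support, P.coeff j * (j * (j - 1)) * r ^ j) / P.eval r -
          ∑ j ∈ P.support, boltzmannWeight P r j * (j - 1) := by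
        rw [Finset.sum_div, ← Finset.sum_sub_distrib]
        exact Finset.sum_congr rfl fun j _ => by rw [boltzmannWeight]; ring
    _ = _ := by
        rw [sum_support_coeff_mul_natCast_mul_sub_one_mul_pow,
          sum_boltzmannWeight_mul_sub_one hsaddle, sub_zero]

/-- The characteristic function of `J - 1`, where `J` has the Boltzmann distribution of `P` at `r`;
the shift by `1` centres `J` at the saddle point `r * P' r = P r`. -/
noncomputable def boltzmannCharFun (P : ℝ[X]) (r θ : ℝ) : ℂ :=
  ∑ j ∈ P.support, boltzmannWeight P r j * Complex.exp ((j - 1 : ℝ) * θ * Complex.I)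

theorem continuous_boltzmannCharFun (P : ℝ[X]) (r : ℝ) : Continuous (boltzmannCharFun P r) := by
  unfold boltzmannCharFun
  fun_prop

theorem boltzmannCharFun_eq_eval_mul_exp (P : ℝ[X]) (r θ : ℝ) :
    boltzmannCharFun P r θ = (P.map Complex.ofRealHom).eval (r * Complex.exp (θ * Complex.I)) *
      Complex.exp (-(θ * Complex.I)) / P.eval r := by
  rw [boltzmannCharFun, eval_map, eval₂_eq_sum, sum_def, Finset.sum_mul, Finset.sum_div]
  refine Finset.sum_congr rfl fun j _ => ?_
  have h_exp : Complex.exp ((j - 1 : ℝ) * θ * Complex.I) =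
      Complex.exp (θ * Complex.I) ^ j * Complex.exp (-(θ * Complex.I)) := by
    rw [← Complex.exp_nat_mul, ← Complex.exp_add]
    push_cast
    ring_nf
  rw [h_exp, boltzmannWeight, Complex.ofRealHom_eq_coe]
  push_cast
  ring

theorem integral_boltzmannCharFun_pow_mul_exp (P : ℝ[X]) (r : ℝ) (n k : ℕ) :
    ∫ θ in -π..π, boltzmannCharFun P r θ ^ (n + k) * Complex.exp (k * θ * Complex.I) =
      2 * π * ((P ^ (n + k)).coeff n * r ^ n / P.eval r ^ (n + k) : ℝ) := by
  have h_coeff := coeff_mul_pow_eq_integral ((P ^ (n + k)).map Complex.ofRealHom) r n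
  rw [coeff_map, Complex.ofRealHom_eq_coe] at h_coeff
  push_cast
  rw [h_coeff, ← mul_div_assoc, ← mul_assoc, mul_one_div_cancel (by simp [Real.pi_ne_zero]),
    one_mul, ← intervalIntegral.integral_div]
  refine intervalIntegral.integral_congr fun θ _ => ?_
  have h_exp : Complex.exp (-(θ * Complex.I)) ^ (n + k) * Complex.exp (k * θ * Complex.I) =
      Complex.exp (-(n * θ * Complex.I)) := by
    rw [← Complex.exp_nat_mul, ← Complex.exp_add]
    push_cast
    ring_nf
  simp only [boltzmannCharFun_eq_eval_mul_exp, Polynomial.map_pow, eval_pow, ← h_exp]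
  ring

theorem norm_boltzmannCharFun_le_exp_neg_mul_sq (hP : ∀ j, 0 ≤ P.coeff j) {i : ℕ}
    (hi : 0 < P.coeff i) (hi' : 0 < P.coeff (i + 1)) (hr : 0 < r) {θ : ℝ} (hθ : |θ| ≤ π) :
    ‖boltzmannCharFun P r θ‖ ≤
      Real.exp (-(boltzmannWeight P r i * boltzmannWeight P r (i + 1) * (2 / π ^ 2)) * θ ^ 2) := by
  have h_eval := eval_pos_of_coeff_nonneg hP hi hr
  exact norm_sum_mul_exp_le_exp_neg_mul_sq
    (fun j _ => div_nonneg (mul_nonneg (hP j) (by positivity)) h_eval.le)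
    (sum_boltzmannWeight h_eval.ne') (mem_support_iff.2 hi.ne') (mem_support_iff.2 hi'.ne')
    (by push_cast; ring) hθ

theorem isLittleO_boltzmannCharFun_sub_taylor (hr : P.eval r ≠ 0)
    (hsaddle : r * P.derivative.eval r = P.eval r) :
    (fun θ : ℝ => boltzmannCharFun P r θ -
        (1 - (r ^ 2 * P.derivative.derivative.eval r / P.eval r / 2 : ℝ) * θ ^ 2)) =o[𝓝 0]
      fun θ : ℝ => θ ^ 2 := by
  rw [← sum_boltzmannWeight_mul_sub_one_sq hsaddle]
  exact isLittleO_sum_mul_exp_sub_taylor (sum_boltzmannWeight hr)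
    (sum_boltzmannWeight_mul_sub_one hsaddle)

theorem tendsto_sqrt_mul_integral_boltzmannCharFun_pow_mul_exp (hP : ∀ j, 0 ≤ P.coeff j) {i : ℕ}
    (hi : 0 < P.coeff i) (hi' : 0 < P.coeff (i + 1)) (hr : 0 < r)
    (hsaddle : r * P.derivative.eval r = P.eval r) (k : ℕ) :
    Tendsto (fun n : ℕ =>
        √n * ∫ θ in -π..π, boltzmannCharFun P r θ ^ n * Complex.exp (k * θ * Complex.I)) atTop
      (𝓝 √(π / (r ^ 2 * P.derivative.derivative.eval r / P.eval r / 2))) := by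
  have h_eval := eval_pos_of_coeff_nonneg hP hi hr
  have h_decay_pos :
      0 < boltzmannWeight P r i * boltzmannWeight P r (i + 1) * (2 / π ^ 2) := by
    unfold boltzmannWeight
    positivity
  have h_laplace := tendsto_sqrt_mul_setIntegral_pow_mul measurableSet_Ioc
    (Ioc_mem_nhds (neg_lt_zero.2 Real.pi_pos) Real.pi_pos)
    (continuous_boltzmannCharFun P r).measurable
    (H := fun θ => Complex.exp (k * θ * Complex.I)) (by fun_prop) (by fun_prop) (C := 1)
    (fun θ _ => by
      rw [← Complex.ofReal_natCast, ← Complex.ofReal_mul, Complex.norm_exp_ofReal_mul_I])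
    h_decay_pos
    (fun θ hθ => norm_boltzmannCharFun_le_exp_neg_mul_sq hP hi hi' hr
      (abs_le.2 ⟨hθ.1.le, hθ.2⟩))
    (isLittleO_boltzmannCharFun_sub_taylor h_eval.ne' hsaddle)
  simpa only [← intervalIntegral.integral_of_le (neg_le_self Real.pi_pos.le), Complex.ofReal_zero,
    mul_zero, zero_mul, Complex.exp_zero, mul_one] using h_laplace

theorem tendsto_sqrt_mul_coeff_pow (hP : ∀ j, 0 ≤ P.coeff j) {i : ℕ} (hi : 0 < P.coeff i)
    (hi' : 0 < P.coeff (i + 1)) (hr : 0 < r) (hsaddle : r * P.derivative.eval r = P.eval r)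
    (k : ℕ) :
    Tendsto (fun n : ℕ =>
        √(n + k : ℕ) * ((P ^ (n + k)).coeff n * r ^ n / P.eval r ^ (n + k))) atTop
      (𝓝 √(P.eval r / (2 * π * (r ^ 2 * P.derivative.derivative.eval r)))) := by
  have h_limit : √(P.eval r / (2 * π * (r ^ 2 * P.derivative.derivative.eval r))) =
      1 / (2 * π) * √(π / (r ^ 2 * P.derivative.derivative.eval r / P.eval r / 2)) := by
    rw [← Real.sqrt_sq (by positivity : 0 ≤ 1 / (2 * π)), ← Real.sqrt_mul (sq_nonneg _)]
    congr 1
    field_simp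
  have h_integral := (tendsto_add_atTop_iff_nat k).2
    (tendsto_sqrt_mul_integral_boltzmannCharFun_pow_mul_exp hP hi hi' hr hsaddle k)
  simp only [integral_boltzmannCharFun_pow_mul_exp] at h_integral
  have h_real : Tendsto (fun n : ℕ =>
      √(n + k : ℕ) * (2 * π * ((P ^ (n + k)).coeff n * r ^ n / P.eval r ^ (n + k)))) atTop
      (𝓝 √(π / (r ^ 2 * P.derivative.derivative.eval r / P.eval r / 2))) := by
    rw [← tendsto_ofReal_iff]
    exact_mod_cast h_integral
  rw [h_limit]
  refine (h_real.const_mul (1 / (2 * π))).congr fun n => ?_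
  field_simp

end SaddlePoint

section TwoPointFunction

open Polynomial

/-- The polynomial `φ` for which `y = G_LO - 1` solves the tree equation `y = g * φ(y)`, that is
`G = 1 + g * (G ^ 4 + μ * G ^ 2)`. -/
noncomputable def twoPointKernel (μ : ℝ) : ℝ[X] :=
  (1 + X) ^ 4 + C μ * (1 + X) ^ 2

theorem coeff_twoPointKernel (μ : ℝ) (j : ℕ) :
    (twoPointKernel μ).coeff j = Nat.choose 4 j + μ * Nat.choose 2 j := by
  rw [twoPointKernel, coeff_add, coeff_C_mul, coeff_one_add_X_pow, coeff_one_add_X_pow]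

theorem coeff_twoPointKernel_nonneg {μ : ℝ} (hμ : -1 ≤ μ) (j : ℕ) :
    0 ≤ (twoPointKernel μ).coeff j := by
  have h_choose : (Nat.choose 2 j : ℝ) ≤ Nat.choose 4 j := by
    exact_mod_cast Nat.choose_le_choose j (by norm_num)
  rw [coeff_twoPointKernel]
  nlinarith [(Nat.choose 2 j).cast_nonneg (α := ℝ)]

theorem eval_twoPointKernel (μ x : ℝ) :
    (twoPointKernel μ).eval (x - 1) = x ^ 2 * (x ^ 2 + μ) := by
  simp only [twoPointKernel, eval_add, eval_mul, eval_pow, eval_C, eval_X, eval_one]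
  ring

theorem eval_derivative_twoPointKernel (μ x : ℝ) :
    (twoPointKernel μ).derivative.eval (x - 1) = 4 * x ^ 3 + 2 * μ * x := by
  simp only [twoPointKernel, derivative_add, derivative_mul, derivative_pow, derivative_C,
    derivative_one, derivative_X, eval_add, eval_mul, eval_pow, eval_C, eval_one, eval_X,
    Nat.cast_ofNat, Nat.add_one_sub_one, zero_add, zero_mul, mul_one, pow_one]
  ring

theorem eval_derivative_derivative_twoPointKernel (μ x : ℝ) :
    (twoPointKernel μ).derivative.derivative.eval (x - 1) = 2 * (6 * x ^ 2 + μ) := by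
  simp only [twoPointKernel, derivative_add, derivative_mul, derivative_pow, derivative_C,
    derivative_one, derivative_X, eval_add, eval_mul, eval_pow, eval_C, eval_one, eval_X,
    Nat.cast_ofNat, Nat.add_one_sub_one, zero_add, zero_mul, mul_one, pow_one]
  ring

theorem coeff_twoPointKernel_pow (μ : ℝ) (m n : ℕ) :
    (twoPointKernel μ ^ m).coeff n =
      ∑ q ∈ Finset.range (m + 1), μ ^ q * Nat.choose m q * Nat.choose (4 * m - 2 * q) n := by
  rw [twoPointKernel, add_comm, add_pow, finsetSum_coeff]
  refine Finset.sum_congr rfl fun q hq => ?_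
  have h_exponent : 2 * q + 4 * (m - q) = 4 * m - 2 * q := by
    have := Finset.mem_range.1 hq
    omega
  have h_term : (C μ * (1 + X) ^ 2) ^ q * ((1 + X) ^ 4) ^ (m - q) * (Nat.choose m q : ℝ[X]) =
      C (μ ^ q * Nat.choose m q) * (1 + X) ^ (4 * m - 2 * q) := by
    rw [mul_pow, ← pow_mul, ← pow_mul, ← h_exponent, pow_add, C_mul, C_pow, C_eq_natCast]
    ring
  rw [h_term, coeff_C_mul, coeff_one_add_X_pow]

theorem natCast_succ_mul_choose_div {n q : ℕ} (hq : q ≤ n + 1) :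
    ((n + 1 : ℕ) : ℝ) * (Nat.choose (4 * (n + 1) - 2 * q) (n + 1) /
      (3 * ((n + 1 : ℕ) : ℝ) - 2 * q + 1)) = Nat.choose (4 * (n + 1) - 2 * q) n := by
  have h_sub : ((4 * (n + 1) - 2 * q - n : ℕ) : ℝ) = 3 * ((n + 1 : ℕ) : ℝ) - 2 * q + 1 := by
    rw [Nat.cast_sub (by omega), Nat.cast_sub (by omega)]
    push_cast
    ring
  have h_pos : (0 : ℝ) < (4 * (n + 1) - 2 * q - n : ℕ) := by
    exact_mod_cast (by omega : 0 < 4 * (n + 1) - 2 * q - n)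
  rw [← h_sub, ← mul_div_assoc, div_eq_iff h_pos.ne', mul_comm]
  exact_mod_cast Nat.choose_succ_right_eq (4 * (n + 1) - 2 * q) n

theorem natCast_succ_mul_alphaCoeff (μ : ℝ) (n : ℕ) :
    ((n + 1 : ℕ) : ℝ) * alphaCoeff μ (n + 1) = (twoPointKernel μ ^ (n + 1)).coeff n := by
  rw [coeff_twoPointKernel_pow, alphaCoeff, Finset.mul_sum]
  refine Finset.sum_congr rfl fun q hq => ?_
  rw [← natCast_succ_mul_choose_div (Nat.lt_succ_iff.1 (Finset.mem_range.1 hq))]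
  ring

theorem tendsto_sqrt_mul_natCast_succ_mul_alphaCoeff {μ x : ℝ} (hμ : -1 < μ) (hx : 1 < x)
    (hroot : -3 * x ^ 3 + 4 * x ^ 2 - μ * x + 2 * μ = 0) :
    Tendsto (fun n : ℕ => √(n + 1 : ℕ) * (((n + 1 : ℕ) : ℝ) * alphaCoeff μ (n + 1) * (x - 1) ^ n /
        (x ^ 2 * (x ^ 2 + μ)) ^ (n + 1))) atTop
      (nhds (√(x ^ 2 * (x ^ 2 + μ) / (6 * x ^ 2 + μ)) / (2 * √Real.pi * (x - 1)))) := by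
  have h_saddle : (x - 1) * (twoPointKernel μ).derivative.eval (x - 1) =
      (twoPointKernel μ).eval (x - 1) := by
    rw [eval_derivative_twoPointKernel, eval_twoPointKernel]
    linear_combination -x * hroot
  have h_coeff_zero : 0 < (twoPointKernel μ).coeff 0 := by
    rw [coeff_twoPointKernel, Nat.choose_zero_right, Nat.choose_zero_right, Nat.cast_one, mul_one]
    linarith
  have h_coeff_one : 0 < (twoPointKernel μ).coeff (0 + 1) := by
    rw [coeff_twoPointKernel, zero_add, Nat.choose_one_right, Nat.choose_one_right]
    push_cast
    linarith
  have h := tendsto_sqrt_mul_coeff_pow (coeff_twoPointKernel_nonneg hμ.le) h_coeff_zero h_coeff_one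
    (sub_pos.2 hx) h_saddle 1
  simp only [eval_twoPointKernel, eval_derivative_derivative_twoPointKernel,
    ← natCast_succ_mul_alphaCoeff] at h
  convert h using 2
  have h_split : x ^ 2 * (x ^ 2 + μ) / (2 * Real.pi * ((x - 1) ^ 2 * (2 * (6 * x ^ 2 + μ)))) =
      x ^ 2 * (x ^ 2 + μ) / (6 * x ^ 2 + μ) / (Real.pi * (2 * (x - 1)) ^ 2) := by
    field_simp
  rw [h_split, Real.sqrt_div' _ (by positivity : 0 ≤ Real.pi * (2 * (x - 1)) ^ 2),
    Real.sqrt_mul Real.pi_pos.le, Real.sqrt_sq (by linarith)]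
  ring

end TwoPointFunction

theorem alpha_asymptotics_general (μ : ℝ) (hμ : -1 < μ) (Gc : ℝ) (hGc1 : 1 < Gc)
    (hGcRoot : -3 * Gc ^ 3 + 4 * Gc ^ 2 - μ * Gc + 2 * μ = 0)
    (gc : ℝ) (hgc : gc = (Gc - 1) / (Gc ^ 2 * (Gc ^ 2 + μ)))
    (K : ℝ) (hK : K = Real.sqrt (Gc ^ 2 * (Gc ^ 2 + μ) / (6 * Gc ^ 2 + μ))) :
    Tendsto
      (fun n : ℕ =>
        alphaCoeff μ n /
          (K * gc ^ (-(n : ℤ)) / (2 * Real.sqrt Real.pi * (n : ℝ) ^ (3 / 2 : ℝ))))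
      atTop (nhds 1) := by
  have h_sub : 0 < Gc - 1 := sub_pos.2 hGc1
  have h_sq : 1 < Gc ^ 2 := one_lt_pow₀ hGc1 two_ne_zero
  have h_add : 0 < Gc ^ 2 + μ := by linarith
  have h_add' : 0 < 6 * Gc ^ 2 + μ := by linarith
  have hK_pos : 0 < K := hK ▸ Real.sqrt_pos.2 (by positivity)
  have h_lim := (tendsto_sqrt_mul_natCast_succ_mul_alphaCoeff hμ hGc1 hGcRoot).const_mul
    (2 * √Real.pi * (Gc - 1) / K)
  rw [← hK, div_mul_div_cancel₀ hK_pos.ne', div_self (by positivity)] at h_lim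
  rw [← tendsto_add_atTop_iff_nat 1]
  refine h_lim.congr fun n => ?_
  have h_rpow : ((n + 1 : ℕ) : ℝ) ^ (3 / 2 : ℝ) = (n + 1 : ℕ) * √(n + 1 : ℕ) := by
    rw [show (3 / 2 : ℝ) = 1 + 1 / 2 by norm_num, Real.rpow_add (by positivity), Real.rpow_one,
      Real.sqrt_eq_rpow]
  rw [h_rpow, hgc, zpow_neg, zpow_natCast, div_pow, pow_succ (Gc - 1)]
  field_simp

/-- Asymptotics of the coefficients: `α_n(μ) ∼ K(μ)·g_c(μ)^{−n}/(2√π·n^{3/2})`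
as `n → ∞`. -/
theorem alpha_asymptotics (μ : ℝ) (hμ : 0 ≤ μ) (Gc : ℝ) (hGc1 : 1 < Gc)
    (hGcRoot : -3 * Gc ^ 3 + 4 * Gc ^ 2 - μ * Gc + 2 * μ = 0)
    (gc : ℝ) (hgc : gc = (Gc - 1) / (Gc ^ 2 * (Gc ^ 2 + μ)))
    (K : ℝ) (hK : K = Real.sqrt (Gc ^ 2 * (Gc ^ 2 + μ) / (6 * Gc ^ 2 + μ))) :
    Tendsto
      (fun n : ℕ =>
        alphaCoeff μ n /
          (K * gc ^ (-(n : ℤ)) / (2 * Real.sqrt Real.pi * (n : ℝ) ^ (3 / 2 : ℝ))))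
      atTop (nhds 1) :=
  alpha_asymptotics_general μ (by linarith) Gc hGc1 hGcRoot gc hgc K hK
end

section
/- Let μ ≥ 0 be real, let G_c(μ) be the unique real root x > 1 of −3x³ + 4x² − μx + 2μ = 0, set g_c(μ) = (G_c(μ) − 1)/(G_c(μ)²·(G_c(μ)² + μ)) and K(μ) = √( G_c(μ)²·(G_c(μ)² + μ) / (6·G_c(μ)² + μ) ). Let S_μ(g) = ∑_{n=0}^{∞} α_n(μ)·g^n. Then, as g tends to g_c(μ) from the left, the product √(1 − g/g_c(μ)) · S_μ′(g) tends to K(μ)/(2·g_c(μ)), where S_μ′ denotes the derivative of S_μ; in particular S_μ′(g) diverges like (1 − g/g_c(μ))^{−1/2} at the critical point. -/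
open Filter

/-!
Let `φ(u) = (1 + u) ^ 4 + μ (1 + u) ^ 2`. By Lagrange inversion, `u(g) = ∑ α_n(μ) g ^ n - 1` is the
power series solution of `u = g φ(u)`. The coefficients are nonnegative, so the partial sums at
`g ≥ 0` stay below every `c ≥ 0` with `g φ(c) ≤ c`. If `φ(τ) = τ φ'(τ)`, this gives convergence up
to `ρ = τ / φ(τ)`, and strict convexity of `φ` forces `u(ρ) = τ`. On `(0, ρ)` the function `u`
inverts `u ↦ u / φ(u)`, whose derivative vanishes at `τ` while its second derivative is negative
there. Hence `u` has a square-root singularity at `ρ`, with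
`√(1 - g / ρ) u'(g) → √(φ(τ) / (2 φ''(τ))) / ρ`. For the present `φ`, the equation
`φ(τ) = τ φ'(τ)` at `τ = G_c - 1` is the cubic equation for `G_c` multiplied by `G_c`.
-/

open Finset Set
open scoped Polynomial PowerSeries Topology

section LagrangeInversion

variable {R : Type*} [CommRing R]

theorem X_pow_succ_dvd_X_mul_aeval_sub (φ : R[X]) {V W : R⟦X⟧} {n : ℕ}
    (h : PowerSeries.X ^ n ∣ V - W) :
    PowerSeries.X ^ (n + 1) ∣
      PowerSeries.X * Polynomial.aeval V φ - PowerSeries.X * Polynomial.aeval W φ := by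
  rw [← mul_sub, pow_succ']
  refine mul_dvd_mul_left _ (h.trans ?_)
  simpa only [Polynomial.eval_map_algebraMap] using
    Polynomial.sub_dvd_eval_sub V W (φ.map (algebraMap R R⟦X⟧))

theorem exists_eq_X_mul_aeval (φ : R[X]) :
    ∃ U : R⟦X⟧, U = PowerSeries.X * Polynomial.aeval U φ := by
  let T : R⟦X⟧ → R⟦X⟧ := fun V ↦ PowerSeries.X * Polynomial.aeval V φ
  have iterate_step (n : ℕ) : PowerSeries.X ^ n ∣ T^[n + 1] 0 - T^[n] 0 := by
    induction n with
    | zero => simp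
    | succ n ih =>
      rw [Function.iterate_succ_apply' T (n + 1)]
      nth_rw 2 [Function.iterate_succ_apply']
      exact X_pow_succ_dvd_X_mul_aeval_sub φ ih
  have coeff_iterate {k n : ℕ} (hkn : k < n) :
      PowerSeries.coeff k (T^[n] 0) = PowerSeries.coeff k (T^[k + 1] 0) := by
    induction n, hkn using Nat.le_induction with
    | base => rfl
    | succ n hkn ih =>
      rw [← ih, ← sub_eq_zero, ← map_sub]
      exact PowerSeries.X_pow_dvd_iff.mp (iterate_step n) k hkn
  let U : R⟦X⟧ := PowerSeries.mk fun k ↦ PowerSeries.coeff k (T^[k + 1] 0)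
  have dvd_sub_iterate (n : ℕ) : PowerSeries.X ^ n ∣ U - T^[n] 0 :=
    PowerSeries.X_pow_dvd_iff.mpr fun k hk ↦ by
      rw [map_sub, PowerSeries.coeff_mk, coeff_iterate hk, sub_self]
  refine ⟨U, PowerSeries.ext fun k ↦ ?_⟩
  have h := X_pow_succ_dvd_X_mul_aeval_sub φ (dvd_sub_iterate k)
  rw [PowerSeries.coeff_mk, Function.iterate_succ_apply', eq_comm, ← sub_eq_zero, ← map_sub]
  exact PowerSeries.X_pow_dvd_iff.mp h k k.lt_succ_self

theorem natCast_mul_derivative_pow_mul_pow (p : R[X]) (a b : ℕ) :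
    ((a + b : ℕ) : R[X]) * (Polynomial.derivative (p ^ a) * p ^ b) =
      a * Polynomial.derivative (p ^ (a + b)) := by
  rcases a with _ | a
  · simp
  · rw [Polynomial.derivative_pow_succ, show a + 1 + b = a + b + 1 by ring,
      Polynomial.derivative_pow_succ]
    simp only [map_add, map_one, map_natCast]
    push_cast
    ring

theorem constantCoeff_aeval (p : R[X]) (U : R⟦X⟧) :
    PowerSeries.constantCoeff (Polynomial.aeval U p) =
      p.eval (PowerSeries.constantCoeff U) := by
  rw [Polynomial.aeval_def, Polynomial.hom_eval₂, PowerSeries.algebraMap_eq,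
    PowerSeries.constantCoeff_comp_C, Polynomial.eval₂_id]

variable [NoZeroDivisors R] [CharZero R] {φ : R[X]} {U : R⟦X⟧}

theorem coeff_aeval_pow_of_lagrange (hU : PowerSeries.constantCoeff U = 0) (j m : ℕ)
    (h : ∀ k, k + 1 = m → (k + 1) * PowerSeries.coeff (k + 1) (Polynomial.aeval U (φ ^ (j + 1))) =
      (Polynomial.derivative (φ ^ (j + 1)) * φ ^ (k + 1)).coeff k) :
    (j + m + 1) * PowerSeries.coeff m (Polynomial.aeval U (φ ^ (j + 1))) =
      (j + 1) * (φ ^ (j + m + 1)).coeff m := by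
  rcases m with _ | m
  · rw [PowerSeries.coeff_zero_eq_constantCoeff_apply, constantCoeff_aeval, hU,
      ← Polynomial.coeff_zero_eq_eval_zero]
    simp
  · have coeff_eq := congrArg (Polynomial.coeff · m)
      (natCast_mul_derivative_pow_mul_pow φ (j + 1) (m + 1))
    simp only [Polynomial.coeff_natCast_mul, Polynomial.coeff_derivative, ← h m rfl] at coeff_eq
    refine mul_right_cancel₀ (Nat.cast_add_one_ne_zero (R := R) m) ?_
    rw [show j + (m + 1) + 1 = j + 1 + (m + 1) by ring]
    push_cast at coeff_eq ⊢
    linear_combination coeff_eq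

/- Induction on `n`: for `H = X ^ (j + 1)` one has `H(U) = X ^ (j + 1) * φ(U) ^ (j + 1)`, so the
formula for `φ ^ (j + 1)` at the smaller index `n - j - 1` applies. -/
theorem lagrange_inversion (hU : U = PowerSeries.X * Polynomial.aeval U φ) (n : ℕ) (H : R[X]) :
    (n + 1) * PowerSeries.coeff (n + 1) (Polynomial.aeval U H) =
      (Polynomial.derivative H * φ ^ (n + 1)).coeff n := by
  induction n using Nat.strong_induction_on generalizing H with
  | _ n ih =>
  induction H using Polynomial.induction_on' with
  | add p q hp hq => simp only [map_add, add_mul, mul_add, hp, hq, Polynomial.coeff_add]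
  | monomial k a =>
  rcases k with _ | j
  · simp
  have aeval_monomial : Polynomial.aeval U (Polynomial.monomial (j + 1) a) =
      PowerSeries.C a * (PowerSeries.X ^ (j + 1) * Polynomial.aeval U (φ ^ (j + 1))) := by
    rw [Polynomial.aeval_monomial, map_pow, ← mul_pow, ← hU, PowerSeries.algebraMap_apply,
      Algebra.algebraMap_self_apply]
  have derivative_monomial : Polynomial.derivative (Polynomial.monomial (j + 1) a) * φ ^ (n + 1) =
      Polynomial.C (a * (j + 1)) * (Polynomial.X ^ j * φ ^ (n + 1)) := by
    rw [Polynomial.derivative_monomial_succ, ← Polynomial.C_mul_X_pow_eq_monomial, mul_assoc]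
  rw [aeval_monomial, derivative_monomial, PowerSeries.coeff_C_mul, Polynomial.coeff_C_mul,
    PowerSeries.coeff_X_pow_mul', Polynomial.coeff_X_pow_mul']
  rcases lt_or_ge n j with hnj | hjn
  · rw [if_neg (by lia), if_neg (by lia), mul_zero, mul_zero, mul_zero]
  obtain ⟨m, rfl⟩ := Nat.exists_eq_add_of_le hjn
  rw [if_pos (by lia), if_pos hjn, show j + m + 1 - (j + 1) = m by lia, Nat.add_sub_cancel_left]
  have constantCoeff_U : PowerSeries.constantCoeff U = 0 := by rw [hU]; simp
  have h := coeff_aeval_pow_of_lagrange constantCoeff_U j m fun k hk ↦ ih k (by lia) _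
  push_cast
  linear_combination a * h

end LagrangeInversion

section NonnegCoeff

variable {R : Type*} [CommSemiring R] [PartialOrder R] [IsOrderedRing R]

variable (R) in
/-- The power series with nonnegative coefficients. A polynomial is said to have nonnegative
coefficients when its coercion to a power series lies in this subsemiring. -/
def nonnegCoeff : Subsemiring R⟦X⟧ where
  carrier := {F | ∀ n, 0 ≤ PowerSeries.coeff n F}
  zero_mem' n := by simp
  one_mem' n := by
    rw [PowerSeries.coeff_one]
    split_ifs
    exacts [zero_le_one, le_rfl]
  add_mem' hF hG n := by
    rw [map_add]
    exact add_nonneg (hF n) (hG n)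
  mul_mem' hF hG n := by
    rw [PowerSeries.coeff_mul]
    exact Finset.sum_nonneg fun i _ ↦ mul_nonneg (hF i.1) (hG i.2)

theorem X_mem_nonnegCoeff : (PowerSeries.X : R⟦X⟧) ∈ nonnegCoeff R := fun n ↦ by
  rw [PowerSeries.coeff_X]
  split_ifs
  exacts [zero_le_one, le_rfl]

theorem C_mem_nonnegCoeff {a : R} (ha : 0 ≤ a) : PowerSeries.C a ∈ nonnegCoeff R := fun n ↦ by
  rw [PowerSeries.coeff_C]
  split_ifs
  exacts [ha, le_rfl]

theorem trunc_mem_nonnegCoeff {F : R⟦X⟧} (hF : F ∈ nonnegCoeff R) (N : ℕ) :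
    (F.trunc N : R⟦X⟧) ∈ nonnegCoeff R := fun n ↦ by
  rw [Polynomial.coeff_coe, PowerSeries.coeff_trunc]
  split_ifs
  exacts [hF n, le_rfl]

theorem aeval_mem_nonnegCoeff {φ : R[X]} (hφ : (φ : R⟦X⟧) ∈ nonnegCoeff R) {F : R⟦X⟧}
    (hF : F ∈ nonnegCoeff R) : Polynomial.aeval F φ ∈ nonnegCoeff R := by
  rw [Polynomial.aeval_eq_sum_range]
  refine sum_mem fun i _ ↦ ?_
  rw [PowerSeries.smul_eq_C_mul]
  exact mul_mem (C_mem_nonnegCoeff (by simpa using hφ i)) (pow_mem hF i)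

theorem derivative_mem_nonnegCoeff {φ : R[X]} (hφ : (φ : R⟦X⟧) ∈ nonnegCoeff R) :
    (Polynomial.derivative φ : R⟦X⟧) ∈ nonnegCoeff R := fun n ↦ by
  rw [Polynomial.coeff_coe, Polynomial.coeff_derivative]
  exact mul_nonneg (by simpa using hφ (n + 1)) (add_nonneg n.cast_nonneg zero_le_one)

end NonnegCoeff

theorem mem_nonnegCoeff_of_eq_X_mul_aeval {R : Type*} [CommRing R] [LinearOrder R]
    [IsStrictOrderedRing R] {φ : R[X]} (hφ : (φ : R⟦X⟧) ∈ nonnegCoeff R) {U : R⟦X⟧}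
    (hU : U = PowerSeries.X * Polynomial.aeval U φ) : U ∈ nonnegCoeff R := by
  rintro (_ | n)
  · rw [hU, PowerSeries.coeff_zero_X_mul]
  · have h := lagrange_inversion hU n Polynomial.X
    have coeff_pow_nonneg : 0 ≤ (φ ^ (n + 1)).coeff n := by
      simpa only [← Polynomial.coeff_coe, Polynomial.coe_pow] using pow_mem hφ (n + 1) n
    rw [Polynomial.aeval_X, Polynomial.derivative_X, one_mul] at h
    exact nonneg_of_mul_nonneg_right (h ▸ coeff_pow_nonneg) (by positivity)

section HasSumAt

/-- The power series `F` converges at `x`, with sum `s`. -/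
def HasSumAt {𝕜 : Type*} [RCLike 𝕜] (F : 𝕜⟦X⟧) (x s : 𝕜) : Prop :=
  HasSum (fun n ↦ PowerSeries.coeff n F * x ^ n) s

variable {𝕜 : Type*} [RCLike 𝕜] {F G : 𝕜⟦X⟧} {x s t : 𝕜}

theorem HasSumAt.add (hF : HasSumAt F x s) (hG : HasSumAt G x t) : HasSumAt (F + G) x (s + t) := by
  simpa only [HasSumAt, map_add, add_mul] using HasSum.add hF hG

theorem HasSumAt.mul (hF : HasSumAt F x s) (hG : HasSumAt G x t) : HasSumAt (F * G) x (s * t) := by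
  have coeff_mul (n : ℕ) : PowerSeries.coeff n (F * G) * x ^ n =
      ∑ k ∈ range (n + 1), PowerSeries.coeff k F * x ^ k *
        (PowerSeries.coeff (n - k) G * x ^ (n - k)) := by
    rw [PowerSeries.coeff_mul, Finset.Nat.sum_antidiagonal_eq_sum_range_succ_mk, Finset.sum_mul]
    refine Finset.sum_congr rfl fun k hk ↦ ?_
    have pow_split := pow_mul_pow_sub x (Finset.mem_range_succ_iff.mp hk)
    linear_combination -PowerSeries.coeff k F * PowerSeries.coeff (n - k) G * pow_split
  have cauchy_product := hasSum_sum_range_mul_of_summable_norm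
    (f := fun n ↦ PowerSeries.coeff n F * x ^ n) (g := fun n ↦ PowerSeries.coeff n G * x ^ n)
    hF.summable.norm hG.summable.norm
  rw [hF.tsum_eq, hG.tsum_eq] at cauchy_product
  simpa only [HasSumAt, coeff_mul] using cauchy_product

theorem hasSumAt_coe (p : 𝕜[X]) (x : 𝕜) : HasSumAt (p : 𝕜⟦X⟧) x (p.eval x) := by
  rw [Polynomial.eval_eq_sum_range]
  simp only [HasSumAt, Polynomial.coeff_coe]
  refine hasSum_sum_of_ne_finset_zero fun n hn ↦ ?_
  rw [Polynomial.coeff_eq_zero_of_natDegree_lt (by simpa using hn), zero_mul]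

theorem HasSumAt.aeval (hF : HasSumAt F x s) (φ : 𝕜[X]) :
    HasSumAt (Polynomial.aeval F φ) x (φ.eval s) := by
  induction φ using Polynomial.induction_on with
  | C a => simpa [PowerSeries.algebraMap_apply] using hasSumAt_coe (Polynomial.C a) x
  | add p q hp hq => simpa using hp.add hq
  | monomial n a ih => simpa [pow_succ, ← mul_assoc] using ih.mul hF

theorem HasSumAt.sum_le {F : ℝ⟦X⟧} {x s : ℝ} (h : HasSumAt F x s) (hF : F ∈ nonnegCoeff ℝ)
    (hx : 0 ≤ x) (A : Finset ℕ) : ∑ n ∈ A, PowerSeries.coeff n F * x ^ n ≤ s :=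
  sum_le_hasSum A (fun n _ ↦ mul_nonneg (hF n) (pow_nonneg hx n)) h

end HasSumAt

section TsumEval

/-- The function defined by a real power series; its value is `0` where the series diverges. -/
noncomputable def tsumEval (F : ℝ⟦X⟧) (x : ℝ) : ℝ :=
  ∑' n, PowerSeries.coeff n F * x ^ n

variable {F : ℝ⟦X⟧} {x r s : ℝ}

theorem HasSumAt.tsumEval_eq (h : HasSumAt F x s) : tsumEval F x = s :=
  h.tsum_eq

theorem tsumEval_mk (a : ℕ → ℝ) : tsumEval (PowerSeries.mk a) = fun x ↦ ∑' n, a n * x ^ n := by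
  funext x
  simp only [tsumEval, PowerSeries.coeff_mk]

theorem norm_coeff_mul_pow_le (F : ℝ⟦X⟧) (hx : x ∈ Icc (-r) r) (n : ℕ) :
    ‖PowerSeries.coeff n F * x ^ n‖ ≤ ‖PowerSeries.coeff n F * r ^ n‖ := by
  rw [norm_mul, norm_mul, norm_pow, norm_pow]
  gcongr
  exact (abs_le.mpr hx).trans (le_abs_self r)

theorem HasSumAt.hasSumAt_tsumEval (h : HasSumAt F r s) (hx : x ∈ Icc (-r) r) :
    HasSumAt F x (tsumEval F x) :=
  (Summable.of_norm_bounded h.summable.norm (norm_coeff_mul_pow_le F hx)).hasSum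

theorem HasSumAt.continuousOn_tsumEval (h : HasSumAt F r s) :
    ContinuousOn (tsumEval F) (Icc (-r) r) :=
  continuousOn_tsum (fun n ↦ by fun_prop) h.summable.norm
    fun n _ hx ↦ norm_coeff_mul_pow_le F hx n

theorem HasSumAt.deriv_tsumEval_C_add (h : HasSumAt F r s) (a : ℝ) (hx : x ∈ Ioo (-r) r) :
    deriv (tsumEval (PowerSeries.C a + F)) x = deriv (tsumEval F) x := by
  have eventually_eq : tsumEval (PowerSeries.C a + F) =ᶠ[𝓝 x] fun y ↦ a + tsumEval F y := by
    filter_upwards [Ioo_mem_nhds hx.1 hx.2] with y hy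
    have hasSumAt_C : HasSumAt (PowerSeries.C a) y a := by
      simpa using hasSumAt_coe (Polynomial.C a) y
    exact (hasSumAt_C.add (h.hasSumAt_tsumEval (Ioo_subset_Icc_self hy))).tsumEval_eq
  rw [eventually_eq.deriv_eq, deriv_const_add]

end TsumEval

section EvalNonneg

variable {p : ℝ[X]} (hp : (p : ℝ⟦X⟧) ∈ nonnegCoeff ℝ)

include hp

theorem eval_pos_of_mem_nonnegCoeff (hp0 : p ≠ 0) {x : ℝ} (hx : 0 < x) : 0 < p.eval x := by
  have leadingCoeff_pos : 0 < p.leadingCoeff :=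
    (Polynomial.leadingCoeff_ne_zero.mpr hp0).lt_of_le' (by simpa using hp p.natDegree)
  calc 0 < p.leadingCoeff * x ^ p.natDegree := by positivity
    _ ≤ p.eval x := by simpa using (hasSumAt_coe p x).sum_le hp hx.le {p.natDegree}

theorem monotoneOn_eval_of_mem_nonnegCoeff : MonotoneOn (fun x ↦ p.eval x) (Ici 0) := by
  intro x hx y _ hxy
  simp only [Polynomial.eval_eq_sum_range]
  refine Finset.sum_le_sum fun n _ ↦ mul_le_mul_of_nonneg_left ?_ (by simpa using hp n)
  exact pow_le_pow_left₀ hx hxy n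

theorem derivative_derivative_eval_pos (hp2 : 2 ≤ p.natDegree) {x : ℝ} (hx : 0 < x) :
    0 < p.derivative.derivative.eval x := by
  refine eval_pos_of_mem_nonnegCoeff
    (derivative_mem_nonnegCoeff (derivative_mem_nonnegCoeff hp)) (fun h ↦ ?_) hx
  rw [Polynomial.derivative_eq_zero, Polynomial.natDegree_derivative] at h
  lia

theorem strictConvexOn_eval_of_mem_nonnegCoeff (hp2 : 2 ≤ p.natDegree) :
    StrictConvexOn ℝ (Ici 0) (fun x ↦ p.eval x) := by
  refine strictConvexOn_of_deriv2_pos (convex_Ici 0) p.continuous.continuousOn fun x hx ↦ ?_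
  have deriv_eval (q : ℝ[X]) : deriv (fun y ↦ q.eval y) = fun y ↦ q.derivative.eval y :=
    funext fun _ ↦ q.deriv
  rw [interior_Ici] at hx
  simpa [deriv_eval] using derivative_derivative_eval_pos hp hp2 hx

end EvalNonneg

section Convergence

variable {φ : ℝ[X]} {U : ℝ⟦X⟧} {g c : ℝ}

theorem sum_range_succ_le_mul_eval_sum_range (hφ : (φ : ℝ⟦X⟧) ∈ nonnegCoeff ℝ)
    (hU : U = PowerSeries.X * Polynomial.aeval U φ) (hg : 0 ≤ g) (N : ℕ) :
    ∑ n ∈ range (N + 1), PowerSeries.coeff n U * g ^ n ≤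
      g * φ.eval (∑ n ∈ range N, PowerSeries.coeff n U * g ^ n) := by
  have trunc_nonneg := trunc_mem_nonnegCoeff (mem_nonnegCoeff_of_eq_X_mul_aeval hφ hU) N
  set V : ℝ⟦X⟧ := PowerSeries.X * Polynomial.aeval (U.trunc N : ℝ⟦X⟧) φ with hV
  have coeff_eq {n : ℕ} (hn : n < N + 1) : PowerSeries.coeff n U = PowerSeries.coeff n V := by
    have trunc_dvd : PowerSeries.X ^ N ∣ U - (U.trunc N : ℝ⟦X⟧) :=
      PowerSeries.X_pow_dvd_iff.mpr fun k hk ↦ by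
        rw [map_sub, PowerSeries.coeff_coe_trunc_of_lt hk, sub_self]
    have h := X_pow_succ_dvd_X_mul_aeval_sub φ trunc_dvd
    rw [← hU, ← hV, PowerSeries.X_pow_dvd_iff] at h
    simpa [sub_eq_zero] using h n hn
  have hasSumAt_V : HasSumAt V g (g * φ.eval ((U.trunc N).eval g)) := by
    simpa using (hasSumAt_coe Polynomial.X g).mul ((hasSumAt_coe (U.trunc N) g).aeval φ)
  have eval_trunc : (U.trunc N).eval g = ∑ n ∈ range N, PowerSeries.coeff n U * g ^ n :=
    PowerSeries.eval₂_trunc_eq_sum_range g (RingHom.id ℝ) N U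
  rw [← eval_trunc, Finset.sum_congr rfl fun n hn ↦ by rw [coeff_eq (Finset.mem_range.mp hn)]]
  exact hasSumAt_V.sum_le (mul_mem X_mem_nonnegCoeff (aeval_mem_nonnegCoeff hφ trunc_nonneg)) hg _

theorem sum_range_le_of_mul_eval_le (hφ : (φ : ℝ⟦X⟧) ∈ nonnegCoeff ℝ)
    (hU : U = PowerSeries.X * Polynomial.aeval U φ) (hg : 0 ≤ g) (hc : 0 ≤ c)
    (hgc : g * φ.eval c ≤ c) (N : ℕ) :
    ∑ n ∈ range N, PowerSeries.coeff n U * g ^ n ≤ c := by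
  induction N with
  | zero => simpa using hc
  | succ N ih =>
    have sum_nonneg : 0 ≤ ∑ n ∈ range N, PowerSeries.coeff n U * g ^ n :=
      Finset.sum_nonneg fun n _ ↦
        mul_nonneg (mem_nonnegCoeff_of_eq_X_mul_aeval hφ hU n) (pow_nonneg hg n)
    calc ∑ n ∈ range (N + 1), PowerSeries.coeff n U * g ^ n
        ≤ g * φ.eval (∑ n ∈ range N, PowerSeries.coeff n U * g ^ n) :=
          sum_range_succ_le_mul_eval_sum_range hφ hU hg N
      _ ≤ g * φ.eval c := mul_le_mul_of_nonneg_left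
          (monotoneOn_eval_of_mem_nonnegCoeff hφ sum_nonneg hc ih) hg
      _ ≤ c := hgc

theorem hasSumAt_tsumEval_of_mul_eval_le (hφ : (φ : ℝ⟦X⟧) ∈ nonnegCoeff ℝ)
    (hU : U = PowerSeries.X * Polynomial.aeval U φ) (hg : 0 ≤ g) (hc : 0 ≤ c)
    (hgc : g * φ.eval c ≤ c) : HasSumAt U g (tsumEval U g) :=
  (summable_of_sum_range_le
    (fun n ↦ mul_nonneg (mem_nonnegCoeff_of_eq_X_mul_aeval hφ hU n) (pow_nonneg hg n))
    (sum_range_le_of_mul_eval_le hφ hU hg hc hgc)).hasSum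

theorem tsumEval_mem_Icc (hφ : (φ : ℝ⟦X⟧) ∈ nonnegCoeff ℝ)
    (hU : U = PowerSeries.X * Polynomial.aeval U φ) (hg : 0 ≤ g) (hc : 0 ≤ c)
    (hgc : g * φ.eval c ≤ c) : tsumEval U g ∈ Icc 0 c := by
  have term_nonneg (n : ℕ) : 0 ≤ PowerSeries.coeff n U * g ^ n :=
    mul_nonneg (mem_nonnegCoeff_of_eq_X_mul_aeval hφ hU n) (pow_nonneg hg n)
  exact ⟨tsum_nonneg term_nonneg,
    Real.tsum_le_of_sum_range_le term_nonneg (sum_range_le_of_mul_eval_le hφ hU hg hc hgc)⟩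

theorem HasSumAt.eq_mul_eval {u : ℝ} (hU : U = PowerSeries.X * Polynomial.aeval U φ)
    (h : HasSumAt U g u) : u = g * φ.eval u := by
  have hasSumAt_rhs : HasSumAt (PowerSeries.X * Polynomial.aeval U φ) g (g * φ.eval u) := by
    simpa using (hasSumAt_coe Polynomial.X g).mul (h.aeval φ)
  rw [← hU] at hasSumAt_rhs
  exact h.unique hasSumAt_rhs

end Convergence

section SquareRootSingularity

variable {f f' S : ℝ → ℝ} {f'' b : ℝ}

theorem tendsto_deriv_div_sub_of_deriv_eq_zero (hf' : HasDerivAt f' f'' b) (hb : f' b = 0) :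
    Tendsto (fun x ↦ f' x / (b - x)) (𝓝[<] b) (𝓝 (-f'')) := by
  have h := (hasDerivAt_iff_tendsto_slope.mp hf').mono_left (nhdsLT_le_nhdsNE b)
  refine h.neg.congr fun x ↦ ?_
  rw [slope_def_field, hb, sub_zero, ← div_neg, neg_sub]

theorem tendsto_sub_div_sq_of_deriv_eq_zero (hf : ∀ᶠ x in 𝓝 b, HasDerivAt f (f' x) x)
    (hf' : HasDerivAt f' f'' b) (hb : f' b = 0) :
    Tendsto (fun x ↦ (f b - f x) / (b - x) ^ 2) (𝓝[<] b) (𝓝 (-f'' / 2)) := by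
  have hasDerivAt_sq (x : ℝ) : HasDerivAt (fun y ↦ (b - y) ^ 2) (-(2 * (b - x))) x := by
    simpa using! ((hasDerivAt_id x).const_sub b).pow 2
  refine HasDerivAt.lhopital_zero_nhdsLT (f' := fun x ↦ -f' x) (g' := fun x ↦ -(2 * (b - x)))
    ?_ (Eventually.of_forall hasDerivAt_sq) ?_ ?_ ?_ ?_
  · filter_upwards [hf.filter_mono nhdsWithin_le_nhds] with x hx using hx.const_sub (f b)
  · filter_upwards [self_mem_nhdsWithin] with x hx
    have : 0 < b - x := sub_pos.mpr hx
    exact neg_ne_zero.mpr (by positivity)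
  · have := (hf.self_of_nhds.continuousAt.tendsto.const_sub (f b)).mono_left
      (nhdsWithin_le_nhds (s := Iio b))
    rwa [sub_self] at this
  · have := (hasDerivAt_sq b).continuousAt.tendsto.mono_left (nhdsWithin_le_nhds (s := Iio b))
    simpa using this
  · refine ((tendsto_deriv_div_sub_of_deriv_eq_zero hf' hb).div_const 2).congr fun x ↦ ?_
    rw [neg_div_neg_eq, div_div, mul_comm]

theorem tendsto_sqrt_sub_div_deriv_of_deriv_eq_zero (hf : ∀ᶠ x in 𝓝 b, HasDerivAt f (f' x) x)
    (hf' : HasDerivAt f' f'' b) (hb : f' b = 0) (hf'' : f'' < 0) :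
    Tendsto (fun x ↦ √(f b - f x) / f' x) (𝓝[<] b) (𝓝 (√(-2 * f''))⁻¹) := by
  have limit_eq : √(-f'' / 2) / -f'' = (√(-2 * f''))⁻¹ := by
    rw [div_eq_iff (by linarith), ← Real.sqrt_inv, ← Real.sqrt_sq (show 0 ≤ -f'' by linarith),
      ← Real.sqrt_mul' _ (sq_nonneg _), Real.sqrt_sq (by linarith)]
    congr 1
    field_simp
  rw [← limit_eq]
  refine ((tendsto_sub_div_sq_of_deriv_eq_zero hf hf' hb).sqrt.div
    (tendsto_deriv_div_sub_of_deriv_eq_zero hf' hb) (by linarith)).congr' ?_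
  filter_upwards [self_mem_nhdsWithin] with x hx
  have hbx : 0 < b - x := sub_pos.mpr hx
  rw [Pi.div_apply, Real.sqrt_div' _ (sq_nonneg _), Real.sqrt_sq hbx.le,
    div_div_div_cancel_right₀ hbx.ne']

/- Near a nondegenerate maximum `b` of `f`, the branch `S` of `f⁻¹` below `b` has derivative
`1 / f' (S g)`, and `f'` is asymptotic to a multiple of `√(f b - f)`. -/
theorem tendsto_sqrt_sub_mul_deriv_of_inverse (hf : ∀ᶠ x in 𝓝 b, HasDerivAt f (f' x) x)
    (hf' : HasDerivAt f' f'' b) (hb : f' b = 0) (hf'' : f'' < 0)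
    (hS : Tendsto S (𝓝[<] f b) (𝓝[<] b)) (hcont : ∀ᶠ g in 𝓝[<] f b, ContinuousAt S g)
    (hfS : ∀ᶠ g in 𝓝[<] f b, f (S g) = g) :
    Tendsto (fun g ↦ √(f b - g) * deriv S g) (𝓝[<] f b) (𝓝 (√(-2 * f''))⁻¹) := by
  have deriv_ne_zero : ∀ᶠ x in 𝓝[<] b, f' x ≠ 0 :=
    ((tendsto_deriv_div_sub_of_deriv_eq_zero hf' hb).eventually_const_lt
      (neg_pos.mpr hf'')).mono fun x hx h ↦ hx.ne' (by rw [h, zero_div])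
  have hfS_nhds : ∀ᶠ g in 𝓝[<] f b, ∀ᶠ y in 𝓝 g, f (S y) = y := by
    filter_upwards [eventually_eventually_nhdsWithin.mpr hfS, self_mem_nhdsWithin] with g hg hgb
    rwa [isOpen_Iio.nhdsWithin_eq hgb] at hg
  refine ((tendsto_sqrt_sub_div_deriv_of_deriv_eq_zero hf hf' hb hf'').comp hS).congr' ?_
  filter_upwards [hcont, hfS, hfS_nhds, hS.eventually deriv_ne_zero,
    hS.eventually (hf.filter_mono nhdsWithin_le_nhds)] with g hSg hfSg hinv hne hderiv
  rw [Function.comp_apply, hfSg, (hderiv.of_local_left_inverse hSg hne hinv).deriv, div_eq_mul_inv]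

end SquareRootSingularity

section CharacteristicEquation

variable {φ : ℝ[X]} {U : ℝ⟦X⟧} {τ : ℝ}

theorem hasDerivAt_div_eval {x : ℝ} (hx : φ.eval x ≠ 0) :
    HasDerivAt (fun y ↦ y / φ.eval y)
      ((φ.eval x - x * φ.derivative.eval x) / φ.eval x ^ 2) x := by
  simpa using (hasDerivAt_id x).fun_div (φ.hasDerivAt x) hx

theorem hasDerivAt_deriv_div_eval_of_eval_eq (hτφ : φ.eval τ ≠ 0)
    (hτ : φ.eval τ = τ * φ.derivative.eval τ) :
    HasDerivAt (fun y ↦ (φ.eval y - y * φ.derivative.eval y) / φ.eval y ^ 2)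
      (-(τ * φ.derivative.derivative.eval τ) / φ.eval τ ^ 2) τ := by
  have hasDerivAt_num : HasDerivAt (fun y ↦ φ.eval y - y * φ.derivative.eval y)
      (-(τ * φ.derivative.derivative.eval τ)) τ := by
    refine ((φ.hasDerivAt τ).fun_sub
      ((hasDerivAt_id τ).fun_mul (φ.derivative.hasDerivAt τ))).congr_deriv ?_
    simp only [id]
    ring
  refine (hasDerivAt_num.fun_div ((φ.hasDerivAt τ).fun_pow 2) (pow_ne_zero 2 hτφ)).congr_deriv ?_
  rw [sub_eq_zero.mpr hτ, zero_mul, sub_zero]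
  field_simp

variable (hφ : (φ : ℝ⟦X⟧) ∈ nonnegCoeff ℝ) (hφ2 : 2 ≤ φ.natDegree) (hτ0 : 0 < τ)

include hφ hφ2 hτ0

theorem eval_pos_of_two_le_natDegree : 0 < φ.eval τ :=
  eval_pos_of_mem_nonnegCoeff hφ (by rintro rfl; simp at hφ2) hτ0

variable (hτ : φ.eval τ = τ * φ.derivative.eval τ)

include hτ

/- The line `v ↦ v / (τ / φ τ)` is the tangent to the strictly convex function `φ` at `τ`. -/
theorem eq_of_eq_div_eval_mul_eval {u : ℝ} (hu : u ∈ Icc 0 τ)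
    (hfix : u = τ / φ.eval τ * φ.eval u) : u = τ := by
  by_contra hne
  have huτ : u < τ := hu.2.lt_of_ne hne
  have slope_lt := (strictConvexOn_eval_of_mem_nonnegCoeff hφ hφ2).slope_lt_of_hasDerivAt
    hu.1 hτ0.le huτ (φ.hasDerivAt τ)
  rw [slope_def_field, div_lt_iff₀ (sub_pos.mpr huτ)] at slope_lt
  rw [div_mul_eq_mul_div, eq_div_iff (eval_pos_of_two_le_natDegree hφ hφ2 hτ0).ne'] at hfix
  nlinarith

variable (hU : U = PowerSeries.X * Polynomial.aeval U φ)

include hU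

theorem hasSumAt_div_eval : HasSumAt U (τ / φ.eval τ) τ := by
  have hφτ := eval_pos_of_two_le_natDegree hφ hφ2 hτ0
  have hρ : τ / φ.eval τ * φ.eval τ ≤ τ := (div_mul_cancel₀ τ hφτ.ne').le
  have hρ0 : 0 ≤ τ / φ.eval τ := by positivity
  have hasSumAt_ρ := hasSumAt_tsumEval_of_mul_eval_le hφ hU hρ0 hτ0.le hρ
  have tsumEval_ρ : tsumEval U (τ / φ.eval τ) = τ := eq_of_eq_div_eval_mul_eval hφ hφ2 hτ0 hτ
    (tsumEval_mem_Icc hφ hU hρ0 hτ0.le hρ) (hasSumAt_ρ.eq_mul_eval hU)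
  rwa [tsumEval_ρ] at hasSumAt_ρ

theorem tsumEval_eq_mul_eval {g : ℝ} (hg : g ∈ Ioo 0 (τ / φ.eval τ)) :
    tsumEval U g = g * φ.eval (tsumEval U g) :=
  ((hasSumAt_div_eval hφ hφ2 hτ0 hτ hU).hasSumAt_tsumEval
    ⟨by linarith [hg.1, hg.2], hg.2.le⟩).eq_mul_eval hU

theorem tsumEval_lt {g : ℝ} (hg : g ∈ Ioo 0 (τ / φ.eval τ)) : tsumEval U g < τ := by
  have hgτ : g * φ.eval τ < τ :=
    (lt_div_iff₀ (eval_pos_of_two_le_natDegree hφ hφ2 hτ0)).mp hg.2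
  refine (tsumEval_mem_Icc hφ hU hg.1.le hτ0.le hgτ.le).2.lt_of_ne fun h ↦ hgτ.ne' ?_
  simpa only [h] using tsumEval_eq_mul_eval hφ hφ2 hτ0 hτ hU hg

theorem continuousAt_tsumEval {g : ℝ} (hg : g ∈ Ioo 0 (τ / φ.eval τ)) :
    ContinuousAt (tsumEval U) g :=
  (hasSumAt_div_eval hφ hφ2 hτ0 hτ hU).continuousOn_tsumEval.continuousAt
    (Icc_mem_nhds (by linarith [hg.1, hg.2]) hg.2)

theorem tendsto_tsumEval_nhdsLT : Tendsto (tsumEval U) (𝓝[<] (τ / φ.eval τ)) (𝓝[<] τ) := by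
  have hφτ := eval_pos_of_two_le_natDegree hφ hφ2 hτ0
  have hρ : 0 < τ / φ.eval τ := by positivity
  have hasSumAt_ρ := hasSumAt_div_eval hφ hφ2 hτ0 hτ hU
  have tendsto_nhds : Tendsto (tsumEval U) (𝓝[<] (τ / φ.eval τ)) (𝓝 τ) := by
    have h := hasSumAt_ρ.continuousOn_tsumEval _ (right_mem_Icc.mpr (by linarith))
    rw [ContinuousWithinAt, hasSumAt_ρ.tsumEval_eq] at h
    refine h.mono_left ?_
    rw [← nhdsWithin_Ioo_eq_nhdsLT (show -(τ / φ.eval τ) < τ / φ.eval τ by linarith)]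
    exact nhdsWithin_mono _ Ioo_subset_Icc_self
  refine tendsto_nhdsWithin_iff.mpr ⟨tendsto_nhds, ?_⟩
  filter_upwards [Ioo_mem_nhdsLT hρ] with g hg using tsumEval_lt hφ hφ2 hτ0 hτ hU hg

theorem eventually_div_eval_tsumEval_eq :
    ∀ᶠ g in 𝓝[<] (τ / φ.eval τ), tsumEval U g / φ.eval (tsumEval U g) = g := by
  have hφτ := eval_pos_of_two_le_natDegree hφ hφ2 hτ0
  have eval_ne_zero : ∀ᶠ x in 𝓝[<] τ, φ.eval x ≠ 0 :=
    (φ.continuousAt.eventually_ne hφτ.ne').filter_mono nhdsWithin_le_nhds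
  filter_upwards [Ioo_mem_nhdsLT (div_pos hτ0 hφτ),
    (tendsto_tsumEval_nhdsLT hφ hφ2 hτ0 hτ hU).eventually eval_ne_zero] with g hg hne
  rw [div_eq_iff hne]
  exact tsumEval_eq_mul_eval hφ hφ2 hτ0 hτ hU hg

/- `U` is the inverse of `u ↦ u / φ u`, which has a nondegenerate maximum at `τ`. -/
theorem tendsto_sqrt_one_sub_div_mul_deriv_tsumEval :
    Tendsto (fun g ↦ √(1 - g / (τ / φ.eval τ)) * deriv (tsumEval U) g) (𝓝[<] (τ / φ.eval τ))
      (𝓝 (√(φ.eval τ / (2 * φ.derivative.derivative.eval τ)) / (τ / φ.eval τ))) := by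
  have hφτ := eval_pos_of_two_le_natDegree hφ hφ2 hτ0
  have hφ''τ := derivative_derivative_eval_pos hφ hφ2 hτ0
  have hρ : 0 < τ / φ.eval τ := div_pos hτ0 hφτ
  have hf : ∀ᶠ x in 𝓝 τ, HasDerivAt (fun y ↦ y / φ.eval y)
      ((φ.eval x - x * φ.derivative.eval x) / φ.eval x ^ 2) x :=
    (φ.continuousAt.eventually_ne hφτ.ne').mono fun x hx ↦ hasDerivAt_div_eval hx
  have second_deriv_neg : -(τ * φ.derivative.derivative.eval τ) / φ.eval τ ^ 2 < 0 := by
    rw [neg_div]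
    exact neg_neg_of_pos (by positivity)
  have continuousAt_U : ∀ᶠ g in 𝓝[<] (τ / φ.eval τ), ContinuousAt (tsumEval U) g := by
    filter_upwards [Ioo_mem_nhdsLT hρ] with g hg using continuousAt_tsumEval hφ hφ2 hτ0 hτ hU hg
  have h := (tendsto_sqrt_sub_mul_deriv_of_inverse hf
    (hasDerivAt_deriv_div_eval_of_eval_eq hφτ.ne' hτ) (by rw [← hτ, sub_self, zero_div])
    second_deriv_neg (tendsto_tsumEval_nhdsLT hφ hφ2 hτ0 hτ hU) continuousAt_U
    (eventually_div_eval_tsumEval_eq hφ hφ2 hτ0 hτ hU)).div_const √(τ / φ.eval τ)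
  convert h using 2 with g
  · rw [one_sub_div hρ.ne', Real.sqrt_div' _ hρ.le, div_mul_eq_mul_div]
  · rw [← Real.sqrt_inv, ← Real.sqrt_div' _ hρ.le, div_eq_iff hρ.ne']
    nth_rw 2 [← Real.sqrt_sq hρ.le]
    rw [← Real.sqrt_mul' _ (sq_nonneg _)]
    congr 1
    field_simp

theorem tendsto_sqrt_one_sub_div_mul_deriv_tsumEval_C_add (a : ℝ) :
    Tendsto (fun g ↦ √(1 - g / (τ / φ.eval τ)) * deriv (tsumEval (PowerSeries.C a + U)) g)
      (𝓝[<] (τ / φ.eval τ))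
      (𝓝 (√(φ.eval τ / (2 * φ.derivative.derivative.eval τ)) / (τ / φ.eval τ))) := by
  have hρ : 0 < τ / φ.eval τ := div_pos hτ0 (eval_pos_of_two_le_natDegree hφ hφ2 hτ0)
  refine (tendsto_sqrt_one_sub_div_mul_deriv_tsumEval hφ hφ2 hτ0 hτ hU).congr' ?_
  filter_upwards [Ioo_mem_nhdsLT hρ] with g hg
  rw [(hasSumAt_div_eval hφ hφ2 hτ0 hτ hU).deriv_tsumEval_C_add a ⟨by linarith [hg.1], hg.2⟩]

end CharacteristicEquation

section TwoPointFunction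

/-- The polynomial `φ(u) = (1 + u) ^ 4 + μ * (1 + u) ^ 2`. The leading-order two-point function
satisfies `G = 1 + g * (G ^ 4 + μ * G ^ 2)`, that is, `u = g * φ(u)` for `u = G - 1`. -/
noncomputable def melonPolynomial (μ : ℝ) : ℝ[X] :=
  (1 + Polynomial.X) ^ 4 + Polynomial.C μ * (1 + Polynomial.X) ^ 2

theorem melonPolynomial_mem_nonnegCoeff {μ : ℝ} (hμ : 0 ≤ μ) :
    (melonPolynomial μ : ℝ⟦X⟧) ∈ nonnegCoeff ℝ := by
  have one_add_X_mem : (1 + PowerSeries.X : ℝ⟦X⟧) ∈ nonnegCoeff ℝ :=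
    add_mem (one_mem _) X_mem_nonnegCoeff
  simpa [melonPolynomial] using add_mem (pow_mem one_add_X_mem 4)
    (mul_mem (C_mem_nonnegCoeff hμ) (pow_mem one_add_X_mem 2))

variable (μ : ℝ)

theorem natDegree_melonPolynomial : (melonPolynomial μ).natDegree = 4 := by
  unfold melonPolynomial
  compute_degree!

theorem eval_melonPolynomial_sub_one (x : ℝ) :
    (melonPolynomial μ).eval (x - 1) = x ^ 2 * (x ^ 2 + μ) := by
  simp only [melonPolynomial, Polynomial.eval_add, Polynomial.eval_pow, Polynomial.eval_one,
    Polynomial.eval_X, Polynomial.eval_mul, Polynomial.eval_C]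
  ring

theorem derivative_melonPolynomial : (melonPolynomial μ).derivative =
    Polynomial.C 4 * (1 + Polynomial.X) ^ 3 + Polynomial.C (2 * μ) * (1 + Polynomial.X) := by
  simp only [melonPolynomial, Polynomial.derivative_add, Polynomial.derivative_C_mul,
    Polynomial.derivative_pow, Polynomial.derivative_one, Polynomial.derivative_X, map_natCast,
    map_mul, map_ofNat]
  push_cast
  ring

theorem eval_derivative_melonPolynomial_sub_one (x : ℝ) :
    (melonPolynomial μ).derivative.eval (x - 1) = 4 * x ^ 3 + 2 * μ * x := by
  simp [derivative_melonPolynomial]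

theorem eval_derivative_derivative_melonPolynomial_sub_one (x : ℝ) :
    (melonPolynomial μ).derivative.derivative.eval (x - 1) = 2 * (6 * x ^ 2 + μ) := by
  simp only [derivative_melonPolynomial, Polynomial.derivative_add, Polynomial.derivative_C_mul,
    Polynomial.derivative_pow, Polynomial.derivative_one, Polynomial.derivative_X,
    Polynomial.eval_add, Polynomial.eval_mul, Polynomial.eval_pow, Polynomial.eval_C,
    Polynomial.eval_one, Polynomial.eval_X, Polynomial.eval_zero]
  push_cast
  ring

theorem coeff_melonPolynomial_pow (m n : ℕ) :
    (melonPolynomial μ ^ m).coeff n =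
      ∑ q ∈ range (m + 1), μ ^ q * m.choose q * (4 * m - 2 * q).choose n := by
  rw [melonPolynomial, add_comm, add_pow, Polynomial.finsetSum_coeff]
  refine Finset.sum_congr rfl fun q hq ↦ ?_
  have hqm : q ≤ m := Finset.mem_range_succ_iff.mp hq
  have term_eq : (Polynomial.C μ * (1 + Polynomial.X) ^ 2) ^ q *
      ((1 + Polynomial.X) ^ 4) ^ (m - q) * (m.choose q : ℝ[X]) =
        Polynomial.C (μ ^ q * m.choose q) * (1 + Polynomial.X) ^ (4 * m - 2 * q) := by
    rw [show 4 * m - 2 * q = 2 * q + 4 * (m - q) by lia, map_mul, map_pow, map_natCast,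
      mul_pow, ← pow_mul, ← pow_mul, pow_add]
    ring
  rw [term_eq, Polynomial.coeff_C_mul, Polynomial.coeff_one_add_X_pow]

theorem coeff_melonPolynomial_pow_succ (n : ℕ) :
    (melonPolynomial μ ^ (n + 1)).coeff n = (n + 1) * alphaCoeff μ (n + 1) := by
  rw [coeff_melonPolynomial_pow, alphaCoeff, Finset.mul_sum]
  refine Finset.sum_congr rfl fun q hq ↦ ?_
  obtain ⟨r, hr⟩ := Nat.exists_eq_add_of_le (Finset.mem_range_succ_iff.mp hq)
  have hr' : (n : ℝ) + 1 = q + r := mod_cast hr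
  have choose_succ : ((4 * (n + 1) - 2 * q).choose (n + 1) : ℝ) * (n + 1) =
      (4 * (n + 1) - 2 * q).choose n * (3 * r + q + 1) := by
    have h := Nat.choose_succ_right_eq (4 * (n + 1) - 2 * q) n
    rw [show 4 * (n + 1) - 2 * q - n = 3 * r + q + 1 by lia] at h
    exact_mod_cast h
  have denom_eq : 3 * ((n + 1 : ℕ) : ℝ) - 2 * q + 1 = 3 * r + q + 1 := by
    push_cast
    linear_combination 3 * hr'
  have denom_ne_zero : 3 * (r : ℝ) + q + 1 ≠ 0 := by positivity
  rw [denom_eq]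
  field_simp
  linear_combination -μ ^ q * (n + 1).choose q * choose_succ

theorem mk_alphaCoeff_eq_one_add {U : ℝ⟦X⟧}
    (hU : U = PowerSeries.X * Polynomial.aeval U (melonPolynomial μ)) :
    PowerSeries.mk (alphaCoeff μ) = PowerSeries.C 1 + U := by
  ext n
  rcases n with _ | n
  · rw [hU]
    simp [alphaCoeff]
  · have h := lagrange_inversion hU n Polynomial.X
    rw [Polynomial.aeval_X, Polynomial.derivative_X, one_mul, coeff_melonPolynomial_pow_succ] at h
    simpa using (mul_left_cancel₀ (Nat.cast_add_one_ne_zero n) h).symm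

theorem sqrt_div_two_mul_two_mul (a b : ℝ) : √(a / (2 * (2 * b))) = √(a / b) / 2 := by
  rw [show a / (2 * (2 * b)) = a / b / 2 ^ 2 by ring, Real.sqrt_div' _ (sq_nonneg 2),
    Real.sqrt_sq zero_le_two]

end TwoPointFunction

/-- As `g → g_c(μ)⁻`, the product `√(1 − g/g_c(μ)) · S_μ′(g)` tends to
`K(μ)/(2·g_c(μ))`, where `S_μ(g) = ∑ α_n(μ) g^n`: the derivative of the
leading-order two-point function diverges like `(1 − g/g_c)^{−1/2}`. -/
theorem deriv_GLO_singularity (μ : ℝ) (hμ : 0 ≤ μ) (Gc : ℝ) (hGc1 : 1 < Gc)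
    (hGcRoot : -3 * Gc ^ 3 + 4 * Gc ^ 2 - μ * Gc + 2 * μ = 0)
    (gc : ℝ) (hgc : gc = (Gc - 1) / (Gc ^ 2 * (Gc ^ 2 + μ)))
    (K : ℝ) (hK : K = Real.sqrt (Gc ^ 2 * (Gc ^ 2 + μ) / (6 * Gc ^ 2 + μ))) :
    Tendsto
      (fun g : ℝ =>
        Real.sqrt (1 - g / gc) *
          deriv (fun x : ℝ => ∑' n : ℕ, alphaCoeff μ n * x ^ n) g)
      (nhdsWithin gc (Set.Iio gc)) (nhds (K / (2 * gc))) := by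
  obtain ⟨U, hU⟩ := exists_eq_X_mul_aeval (melonPolynomial μ)
  have hφ2 : 2 ≤ (melonPolynomial μ).natDegree := by rw [natDegree_melonPolynomial]; norm_num
  have characteristic_eq : (melonPolynomial μ).eval (Gc - 1) =
      (Gc - 1) * (melonPolynomial μ).derivative.eval (Gc - 1) := by
    rw [eval_melonPolynomial_sub_one, eval_derivative_melonPolynomial_sub_one]
    linear_combination Gc * hGcRoot
  have limit_eq : √(Gc ^ 2 * (Gc ^ 2 + μ) / (2 * (2 * (6 * Gc ^ 2 + μ)))) / gc = K / (2 * gc) := by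
    rw [sqrt_div_two_mul_two_mul, ← hK, div_div]
  have h := tendsto_sqrt_one_sub_div_mul_deriv_tsumEval_C_add
    (melonPolynomial_mem_nonnegCoeff hμ) hφ2 (sub_pos.mpr hGc1) characteristic_eq hU 1
  rwa [← mk_alphaCoeff_eq_one_add μ hU, tsumEval_mk, eval_melonPolynomial_sub_one,
    eval_derivative_derivative_melonPolynomial_sub_one, ← hgc, limit_eq] at h
end
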